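/- For every m ≥ 1 even and every n ≥ 2, the n-th bidirectional topological complexity of the m-sphere equals n+1: TC^β_n(S^m) = n+1, where S^m is the unit sphere in ℝ^{m+1}. -/

import Mathlib

open unitInterval

noncomputable section

/-- The point `j/(n-1)` of the unit interval, for `j : Fin n`.
These are the `n` evaluation points `0, 1/(n-1), …, (n-2)/(n-1), 1`. -/
def evalPt (n : ℕ) (j : Fin n) : unitInterval :=
  ⟨(j : ℝ) / ((n : ℝ) - 1), by
    have hn : 1 ≤ n := j.pos
    rcases eq_or_lt_of_le hn with h | h
    · have hn1 : n = 1 := h.symm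
      subst hn1
      simp [Fin.fin_one_eq_zero j]
    · have h1 : (0 : ℝ) < (n : ℝ) - 1 := by
        have : (1 : ℝ) < (n : ℝ) := by exact_mod_cast h
        linarith
      constructor
      · exact div_nonneg (Nat.cast_nonneg _) h1.le
      · rw [div_le_one h1]
        have hj : (j : ℕ) + 1 ≤ n := j.is_lt
        have : ((j : ℕ) : ℝ) + 1 ≤ (n : ℝ) := by exact_mod_cast hj
        linarith⟩

/-- Coordinate reversal (the involution `β`) on `n`-tuples:
`β·(x_1,…,x_n) = (x_n,…,x_1)`. -/
def rtuple {X : Type*} {n : ℕ} (x : Fin n → X) : Fin n → X := fun j => x j.rev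

/-- Path reversal (the involution `β`) on the free path space `C(I,X)`:
`(β·γ)(t) = γ(1-t)`. -/
def rpath {X : Type*} [TopologicalSpace X] (γ : C(unitInterval, X)) : C(unitInterval, X) :=
  γ.comp ⟨unitInterval.symm, unitInterval.continuous_symm⟩

/-- `X^n` can be covered by `k` open sets, on each of which there is a continuous
section of the evaluation map `e_n : C(I,X) → X^n`,
`γ ↦ (γ(0), γ(1/(n-1)), …, γ(1))`. -/
def HasPlanners (X : Type*) [TopologicalSpace X] (n k : ℕ) : Prop :=
  ∃ U : Fin k → Set (Fin n → X),
    (∀ i, IsOpen (U i)) ∧ (⋃ i, U i) = Set.univ ∧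
    (∀ i, ∃ s : C(U i, C(unitInterval, X)),
      ∀ x : U i, ∀ j : Fin n, s x (evalPt n j) = (x : Fin n → X) j)

/-- The `n`-th (ordinary, higher) topological complexity `TC_n(X)`, as a value in `ℕ∞`. -/
def TCn (X : Type*) [TopologicalSpace X] (n : ℕ) : ℕ∞ :=
  sInf {k : ℕ∞ | ∃ m : ℕ, (m : ℕ∞) = k ∧ HasPlanners X n m}

/-- `X^n` can be covered by `k` β-invariant open sets, on each of which there is a
continuous β-equivariant section of the evaluation map `e_n : C(I,X) → X^n`
(a bidirectional motion planner). -/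
def HasBidirPlanners (X : Type*) [TopologicalSpace X] (n k : ℕ) : Prop :=
  ∃ U : Fin k → Set (Fin n → X),
    (∀ i, IsOpen (U i)) ∧ (⋃ i, U i) = Set.univ ∧
    (∀ i, ∀ x ∈ U i, rtuple x ∈ U i) ∧
    (∀ i, ∃ s : C(U i, C(unitInterval, X)),
      (∀ x : U i, ∀ j : Fin n, s x (evalPt n j) = (x : Fin n → X) j) ∧
      (∀ x : U i, ∀ hx : rtuple (x : Fin n → X) ∈ U i,
        s ⟨rtuple (x : Fin n → X), hx⟩ = rpath (s x)))

/-- The `n`-th bidirectional topological complexity `TC^β_n(X)`, as a value in `ℕ∞`. -/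
def TCbeta (X : Type*) [TopologicalSpace X] (n : ℕ) : ℕ∞ :=
  sInf {k : ℕ∞ | ∃ m : ℕ, (m : ℕ∞) = k ∧ HasBidirPlanners X n m}

/-- The action of a permutation `sg ∈ Σ_n` on `n`-tuples (by permuting coordinates). -/
def permTuple {X : Type*} {n : ℕ} (sg : Equiv.Perm (Fin n)) (x : Fin n → X) : Fin n → X :=
  fun j => x (sg j)

/-- `X^n` can be covered by `k` `Σ_n`-invariant open sets, on each of which there is a
continuous `Σ_n`-equivariant section of `E_n : X^{J_n} → X^n`,
`(α_1,…,α_n) ↦ (α_1(1),…,α_n(1))`, where `X^{J_n}` is the space of `n`-tuples of paths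
with a common initial point. -/
def HasSymPlanners (X : Type*) [TopologicalSpace X] (n k : ℕ) : Prop :=
  ∃ U : Fin k → Set (Fin n → X),
    (∀ i, IsOpen (U i)) ∧ (⋃ i, U i) = Set.univ ∧
    (∀ i, ∀ sg : Equiv.Perm (Fin n), ∀ x ∈ U i, permTuple sg x ∈ U i) ∧
    (∀ i, ∃ s : C(U i, Fin n → C(unitInterval, X)),
      (∀ x : U i, ∀ j j' : Fin n, s x j 0 = s x j' 0) ∧
      (∀ x : U i, ∀ j : Fin n, s x j 1 = (x : Fin n → X) j) ∧
      (∀ x : U i, ∀ sg : Equiv.Perm (Fin n),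
        ∀ hx : permTuple sg (x : Fin n → X) ∈ U i,
        s ⟨permTuple sg (x : Fin n → X), hx⟩ = permTuple sg (s x)))

/-- The `n`-th symmetrized topological complexity `TC^Σ_n(X)`, as a value in `ℕ∞`. -/
def TCsym (X : Type*) [TopologicalSpace X] (n : ℕ) : ℕ∞ :=
  sInf {k : ℕ∞ | ∃ m : ℕ, (m : ℕ∞) = k ∧ HasSymPlanners X n m}

/-- The unit sphere `S^m ⊂ ℝ^{m+1}`. -/
abbrev Sph (m : ℕ) : Type :=
  Metric.sphere (0 : EuclideanSpace ℝ (Fin (m + 1))) 1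


/-!
Lower bound. The fundamental class `u` of `S^m` gives zero divisors `u_c - u_c'` in the cohomology
of `(S^m)^n`, one of which dies on every open set with a section of `e_n`; so a product of `n` of
them that survives forces `n + 1` open sets. For `m` even the classes `u_c` commute, and since
`u_c² = 0` the product of `∑ c, A i c • u_c` over `i` is `A.permanent` times the top class. The
factors `u_1 - u_0, u_1 - u_0, u_2 - u_0, …, u_{n-1} - u_0` have a negative permanent. To avoid
singular cohomology, classes are represented by cochains on tuples of nearby points, and the top
class is detected by pulling back along the collapse of a triangulated torus onto `(S^m)^n` and
summing over all simplices.

Upper bound. Fix a pole `N`. Join consecutive points of a tuple by the geodesic, made unique between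
antipodal points by bending it towards `N`, and between the two poles by bending it in a fixed
direction orthogonal to `N`; this choice is invariant under reversal. It is continuous on the strata
of tuples with given poles and antipodal pairs. Give a stratum as rank the number of its poles plus
the number of its antipodal pairs of non-poles: ranks lie between `0` and `n`, the rank increases
strictly in the boundary of a stratum, and so strata of equal rank have disjoint neighbourhoods, to
which the sections extend. The strata of each of the `n + 1` ranks yield one open set.
-/

/-! ### Cochains on tuples of points -/

/-- Unnormalised ordered cochains on the simplex spanned by the points of `X`, with
coefficients in `R`: a `(q + 1)`-tuple is encoded as a list of length `q + 1`. -/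
abbrev TupleCochain (R X : Type*) := List X → R

namespace TupleCochain

open List

variable {R X Y : Type*} [CommRing R]

/-- The simplicial coboundary, raising degrees by one. On one-point lists it is the
augmentation `φ ↦ φ []`. -/
def coboundary : TupleCochain R X →ₗ[R] TupleCochain R X where
  toFun φ l := ∑ i ∈ Finset.range l.length, (-1) ^ i * φ (l.eraseIdx i)
  map_add' φ ψ := by
    ext l
    simp only [Pi.add_apply, mul_add, Finset.sum_add_distrib]
  map_smul' r φ := by
    ext l
    simp only [Pi.smul_apply, smul_eq_mul, RingHom.id_apply, Finset.mul_sum, mul_left_comm]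

theorem coboundary_apply (φ : TupleCochain R X) (l : List X) :
    coboundary φ l = ∑ i ∈ Finset.range l.length, (-1) ^ i * φ (l.eraseIdx i) :=
  rfl

@[simp]
theorem coboundary_nil (φ : TupleCochain R X) : coboundary φ [] = 0 :=
  rfl

theorem coboundary_cons (φ : TupleCochain R X) (x : X) (l : List X) :
    coboundary φ (x :: l) = φ l - coboundary (fun l' => φ (x :: l')) l := by
  simp only [coboundary_apply, length_cons, Finset.sum_range_succ', eraseIdx_cons_succ,
    eraseIdx_cons_zero, pow_zero, one_mul, pow_succ, mul_neg, mul_one, neg_mul,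
    Finset.sum_neg_distrib]
  ring

@[simp]
theorem coboundary_singleton (φ : TupleCochain R X) (x : X) : coboundary φ [x] = φ [] := by
  simp [coboundary_cons]

theorem eraseIdx_ofFn {q : ℕ} (v : Fin (q + 1) → X) (k : Fin (q + 1)) :
    (ofFn v).eraseIdx k = ofFn (v ∘ k.succAbove) := by
  refine ext_getElem (by simp [length_eraseIdx, k.is_le]) fun i _ _ => ?_
  simp only [getElem_eraseIdx, List.getElem_ofFn, Function.comp_apply, Fin.succAbove, Fin.lt_def,
    Fin.val_castSucc]
  split_ifs <;> rfl

theorem coboundary_ofFn {q : ℕ} (φ : TupleCochain R X) (v : Fin (q + 1) → X) :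
    coboundary φ (ofFn v) = ∑ k : Fin (q + 1), (-1) ^ (k : ℕ) * φ (ofFn (v ∘ k.succAbove)) := by
  simp only [coboundary_apply, length_ofFn, Finset.sum_range, eraseIdx_ofFn]

theorem coboundary_coboundary (φ : TupleCochain R X) : coboundary (coboundary φ) = 0 := by
  ext l
  induction l generalizing φ with
  | nil => rfl
  | cons x l ih =>
    have split : (fun l' => coboundary φ (x :: l')) =
        φ - coboundary (fun l' => φ (x :: l')) := funext (coboundary_cons φ x)
    rw [coboundary_cons, split, map_sub, Pi.sub_apply, ih]
    simp

/-- Pullback of cochains along a map, applied to every vertex of a tuple. -/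
def pullback (f : X → Y) : TupleCochain R Y →ₗ[R] TupleCochain R X :=
  LinearMap.funLeft R R (List.map f)

@[simp]
theorem pullback_apply (f : X → Y) (φ : TupleCochain R Y) (l : List X) :
    pullback f φ l = φ (l.map f) :=
  rfl

theorem coboundary_pullback (f : X → Y) (φ : TupleCochain R Y) :
    coboundary (pullback f φ) = pullback f (coboundary φ) := by
  ext l
  simp [coboundary_apply, eraseIdx_map]

/-- The prism operator, a chain homotopy from `pullback f` to `pullback g`. -/
def prism (f g : X → Y) : TupleCochain R Y →ₗ[R] TupleCochain R X where
  toFun φ l := ∑ i ∈ Finset.range l.length,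
    (-1) ^ i * φ ((l.take (i + 1)).map f ++ (l.drop i).map g)
  map_add' φ ψ := by
    ext l
    simp only [Pi.add_apply, mul_add, Finset.sum_add_distrib]
  map_smul' r φ := by
    ext l
    simp only [Pi.smul_apply, smul_eq_mul, RingHom.id_apply, Finset.mul_sum, mul_left_comm]

theorem prism_apply (f g : X → Y) (φ : TupleCochain R Y) (l : List X) :
    prism f g φ l = ∑ i ∈ Finset.range l.length,
      (-1) ^ i * φ ((l.take (i + 1)).map f ++ (l.drop i).map g) :=
  rfl

@[simp]
theorem prism_nil (f g : X → Y) (φ : TupleCochain R Y) : prism f g φ [] = 0 :=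
  rfl

theorem prism_cons (f g : X → Y) (φ : TupleCochain R Y) (x : X) (l : List X) :
    prism f g φ (x :: l) =
      φ (f x :: g x :: l.map g) - prism f g (fun l' => φ (f x :: l')) l := by
  simp only [prism_apply, length_cons, Finset.sum_range_succ', take_succ_cons, drop_succ_cons,
    map_cons, cons_append, take_zero, drop_zero, map_nil, nil_append, pow_zero, one_mul,
    pow_succ, mul_neg, mul_one, neg_mul, Finset.sum_neg_distrib]
  ring

theorem coboundary_prism_add_prism_coboundary (f g : X → Y) (φ : TupleCochain R Y) :
    coboundary (prism f g φ) + prism f g (coboundary φ) = pullback g φ - pullback f φ := by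
  ext l
  induction l generalizing φ with
  | nil => simp
  | cons x l ih =>
    have split_prism : (fun l' => prism f g φ (x :: l')) =
        pullback g (fun l' => φ (f x :: g x :: l')) - prism f g (fun l' => φ (f x :: l')) :=
      funext (prism_cons f g φ x)
    have split_coboundary : (fun l' => coboundary φ (f x :: l')) =
        φ - coboundary (fun l' => φ (f x :: l')) := funext (coboundary_cons φ (f x))
    have step := ih fun l' => φ (f x :: l')
    rw [Pi.add_apply, coboundary_cons, split_prism, prism_cons, split_coboundary]
    simp only [Pi.add_apply, Pi.sub_apply, pullback_apply, coboundary_cons,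
      map_sub, coboundary_pullback, map_cons] at step ⊢
    linear_combination step

/-- The cup product of a cochain `φ` of degree `p` with a cochain `ψ`. -/
def cup (p : ℕ) (φ ψ : TupleCochain R X) : TupleCochain R X :=
  fun l => φ (l.take (p + 1)) * ψ (l.drop p)

theorem coboundary_cup (p : ℕ) (φ ψ : TupleCochain R X) {l : List X} (hl : p + 2 ≤ l.length) :
    coboundary (cup p φ ψ) l =
      cup (p + 1) (coboundary φ) ψ l + (-1) ^ p * cup p φ (coboundary ψ) l := by
  induction p generalizing φ l with
  | zero =>
    obtain ⟨x, y, l, rfl⟩ : ∃ x y l', l = x :: y :: l' := by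
      match l, hl with
      | x :: y :: l', _ => exact ⟨x, y, l', rfl⟩
    have cup_cons : (fun l' => cup 0 φ ψ (x :: l')) = φ [x] • fun l' => ψ (x :: l') := by
      ext l'
      simp [cup]
    rw [coboundary_cons, cup_cons, map_smul]
    simp [cup, coboundary_cons]
    ring
  | succ p ih =>
    obtain ⟨x, l, rfl⟩ := exists_cons_of_length_pos (by omega : 0 < l.length)
    have cup_cons : (fun l' => cup (p + 1) φ ψ (x :: l')) = cup p (fun l' => φ (x :: l')) ψ := by
      ext l'
      simp [cup]
    rw [coboundary_cons, cup_cons, ih _ (by simpa using hl)]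
    simp only [cup, take_succ_cons, drop_succ_cons, coboundary_cons]
    ring

/-- The cup product of `n` cochains of degree `m`. -/
def cupProd (m : ℕ) {n : ℕ} (φ : Fin n → TupleCochain R X) : TupleCochain R X :=
  fun l => ∏ i : Fin n, φ i ((l.drop (i * m)).take (m + 1))

@[simp]
theorem cupProd_zero (m : ℕ) (φ : Fin 0 → TupleCochain R X) : cupProd m φ = 1 := by
  ext l
  simp [cupProd]

theorem cupProd_succ (m : ℕ) {n : ℕ} (φ : Fin (n + 1) → TupleCochain R X) :
    cupProd m φ = cup m (φ 0) (cupProd m (Fin.tail φ)) := by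
  ext l
  simp [cupProd, cup, Fin.prod_univ_succ, Fin.tail, drop_drop, add_mul, add_comm]

theorem pullback_cupProd (f : X → Y) (m : ℕ) {n : ℕ} (φ : Fin n → TupleCochain R Y) :
    pullback f (cupProd m φ) = cupProd m fun i => pullback f (φ i) := by
  ext l
  simp [cupProd, map_take, map_drop]

theorem cupProd_ofFn {m n : ℕ} (φ : Fin n → TupleCochain R X) (w : ℕ → X) :
    cupProd m φ (ofFn fun k : Fin (n * m + 1) => w k) =
      ∏ i : Fin n, φ i (ofFn fun r : Fin (m + 1) => w (i * m + r)) := by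
  refine Finset.prod_congr rfl fun i _ => congr_arg (φ i) ?_
  have : (i + 1) * m ≤ n * m := Nat.mul_le_mul_right m i.isLt
  rw [add_mul, one_mul] at this
  refine List.ext_getElem ?_ fun j _ _ => by simp [-ofFn_succ]
  simp only [length_take, length_drop, length_ofFn]
  omega

variable {G : Set (List X)} {p q : ℕ}

/-- `φ` is a cocycle of degree `q` on the tuples in `G`. -/
def IsCocycleOn (G : Set (List X)) (q : ℕ) (φ : TupleCochain R X) : Prop :=
  ∀ l ∈ G, l.length = q + 2 → coboundary φ l = 0

/-- `φ` and `ψ` are cohomologous cochains of degree `q` on the tuples in `G`. The condition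
`η [] = 0` removes the augmentation: in degree `0` the two cochains have to be equal. -/
def CohomologousOn (G : Set (List X)) (q : ℕ) (φ ψ : TupleCochain R X) : Prop :=
  ∃ η : TupleCochain R X, η [] = 0 ∧
    ∀ l ∈ G, l.length = q + 1 → φ l - ψ l = coboundary η l

theorem CohomologousOn.of_eq {φ ψ : TupleCochain R X}
    (h : ∀ l ∈ G, l.length = q + 1 → φ l = ψ l) : CohomologousOn G q φ ψ :=
  ⟨0, rfl, fun l hl hlen => by simp [h l hl hlen]⟩

theorem CohomologousOn.eq_of_length_eq_one {φ ψ : TupleCochain R X}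
    (h : CohomologousOn G 0 φ ψ) {l : List X} (hl : l ∈ G) (hlen : l.length = 1) : φ l = ψ l := by
  obtain ⟨η, hη, hφψ⟩ := h
  obtain ⟨x, rfl⟩ := length_eq_one_iff.1 hlen
  rw [← sub_eq_zero, hφψ _ hl hlen, coboundary_singleton, hη]

theorem CohomologousOn.symm {φ ψ : TupleCochain R X} (h : CohomologousOn G q φ ψ) :
    CohomologousOn G q ψ φ := by
  obtain ⟨η, hη, hφψ⟩ := h
  refine ⟨-η, by simp [hη], fun l hl hlen => ?_⟩
  rw [map_neg, Pi.neg_apply, ← hφψ l hl hlen, neg_sub]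

theorem CohomologousOn.trans {φ ψ χ : TupleCochain R X} (h₁ : CohomologousOn G q φ ψ)
    (h₂ : CohomologousOn G q ψ χ) : CohomologousOn G q φ χ := by
  obtain ⟨η, hη, hφψ⟩ := h₁
  obtain ⟨θ, hθ, hψχ⟩ := h₂
  refine ⟨η + θ, by simp [hη, hθ], fun l hl hlen => ?_⟩
  rw [map_add, Pi.add_apply, ← hφψ l hl hlen, ← hψχ l hl hlen]
  ring

theorem CohomologousOn.pullback {G' : Set (List Y)} {φ ψ : TupleCochain R X}
    (h : CohomologousOn G q φ ψ) {f : Y → X} (hf : ∀ l ∈ G', l.map f ∈ G) :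
    CohomologousOn G' q (TupleCochain.pullback f φ) (TupleCochain.pullback f ψ) := by
  obtain ⟨η, hη, hφψ⟩ := h
  refine ⟨TupleCochain.pullback f η, by simpa using hη, fun l hl hlen => ?_⟩
  simpa [coboundary_pullback] using hφψ _ (hf l hl) (by simpa using hlen)

theorem IsCocycleOn.sub_coboundary {φ : TupleCochain R X} (hφ : IsCocycleOn G q φ)
    (η : TupleCochain R X) : IsCocycleOn G q (φ - coboundary η) := fun l hl hlen => by
  simp [coboundary_coboundary, hφ l hl hlen]

theorem IsCocycleOn.cup (hG : ∀ l ∈ G, ∀ l', l' <+ l → l' ∈ G) {φ ψ : TupleCochain R X}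
    (hφ : IsCocycleOn G p φ) (hψ : IsCocycleOn G q ψ) :
    IsCocycleOn G (p + q) (cup p φ ψ) := fun l hl hlen => by
  have hφ' := hφ _ (hG l hl _ (take_sublist (p + 2) l)) (by simp [hlen])
  have hψ' := hψ _ (hG l hl _ (drop_sublist p l)) (by simp [hlen]; omega)
  rw [coboundary_cup p φ ψ (by omega)]
  simp [TupleCochain.cup, hφ', hψ']

theorem CohomologousOn.cup_right (hG : ∀ l ∈ G, ∀ l', l' <+ l → l' ∈ G)
    {φ ψ ψ' : TupleCochain R X} (h : CohomologousOn G q ψ ψ') (hφ : IsCocycleOn G p φ) :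
    CohomologousOn G (p + q) (cup p φ ψ) (cup p φ ψ') := by
  have drop_mem {l : List X} (hl : l ∈ G) : l.drop p ∈ G := hG l hl _ (drop_sublist p l)
  rcases Nat.eq_zero_or_pos q with rfl | hq
  · refine .of_eq fun l hl hlen => ?_
    rw [cup, cup, h.eq_of_length_eq_one (drop_mem hl) (by simp [hlen])]
  obtain ⟨η, hη, hψψ'⟩ := h
  refine ⟨(-1 : R) ^ p • cup p φ η, by simp [cup, hη], fun l hl hlen => ?_⟩
  have hφ' := hφ _ (hG l hl _ (take_sublist (p + 2) l)) (by simp [hlen]; omega)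
  rw [map_smul, Pi.smul_apply, coboundary_cup p φ η (by omega), smul_eq_mul]
  simp only [cup, hφ', zero_mul, zero_add, ← hψψ' _ (drop_mem hl) (by simp [hlen]; omega)]
  rw [← mul_assoc, ← mul_pow]
  simp [mul_sub]

theorem CohomologousOn.cup_left (hG : ∀ l ∈ G, ∀ l', l' <+ l → l' ∈ G)
    {φ φ' ψ : TupleCochain R X} (h : CohomologousOn G p φ φ') (hψ : IsCocycleOn G q ψ) :
    CohomologousOn G (p + q) (cup p φ ψ) (cup p φ' ψ) := by
  have take_mem {l : List X} (hl : l ∈ G) : l.take (p + 1) ∈ G := hG l hl _ (take_sublist _ l)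
  cases p with
  | zero =>
    refine .of_eq fun l hl hlen => ?_
    rw [cup, cup, h.eq_of_length_eq_one (take_mem hl) (by simp [hlen])]
  | succ p =>
    obtain ⟨η, hη, hφφ'⟩ := h
    refine ⟨cup p η ψ, by simp [cup, hη], fun l hl hlen => ?_⟩
    have hψ' := hψ _ (hG l hl _ (drop_sublist p l)) (by simp [hlen]; omega)
    rw [coboundary_cup p η ψ (by omega)]
    simp only [cup, hψ', ← hφφ' _ (take_mem hl) (by simp [hlen])]
    ring

theorem IsCocycleOn.cupProd (hG : ∀ l ∈ G, ∀ l', l' <+ l → l' ∈ G) {m n : ℕ}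
    {φ : Fin n → TupleCochain R X} (hφ : ∀ i, IsCocycleOn G m (φ i)) :
    IsCocycleOn G (n * m) (cupProd m φ) := by
  induction n with
  | zero =>
    intro l _ hlen
    obtain ⟨x, y, rfl⟩ := length_eq_two.1 (by simpa using hlen)
    simp [coboundary_cons]
  | succ n ih =>
    rw [cupProd_succ, add_mul, one_mul, add_comm]
    exact (hφ 0).cup hG (ih fun i => hφ i.succ)

theorem CohomologousOn.cupProd (hG : ∀ l ∈ G, ∀ l', l' <+ l → l' ∈ G) {m n : ℕ}
    {φ ψ : Fin n → TupleCochain R X} (hφ : ∀ i, IsCocycleOn G m (φ i))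
    (hψ : ∀ i, IsCocycleOn G m (ψ i)) (h : ∀ i, CohomologousOn G m (φ i) (ψ i)) :
    CohomologousOn G (n * m) (cupProd m φ) (cupProd m ψ) := by
  induction n with
  | zero => exact .of_eq fun l _ _ => by simp
  | succ n ih =>
    rw [cupProd_succ, cupProd_succ, add_mul, one_mul, add_comm]
    exact ((h 0).cup_left hG (.cupProd hG fun i => hφ i.succ)).trans
      ((ih (fun i => hφ i.succ) (fun i => hψ i.succ) fun i => h i.succ).cup_right hG (hψ 0))

end TupleCochain

/-! ### Zero divisors and motion planners -/

namespace TupleCochain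

open Filter List Topology

section Homotopy

variable {R X Y : Type*} [CommRing R] {q : ℕ} {φ : TupleCochain R X}

theorem CohomologousOn.pullback_of_contiguous {G : Set (List Y)} {G' : Set (List X)}
    (hφ : IsCocycleOn G' q φ) {f g : Y → X}
    (hfg : ∀ l ∈ G, ∀ i < l.length, (l.take (i + 1)).map f ++ (l.drop i).map g ∈ G') :
    CohomologousOn G q (TupleCochain.pullback f φ) (TupleCochain.pullback g φ) := by
  refine .symm ⟨prism f g φ, prism_nil f g φ, fun l hl hlen => ?_⟩
  have vanishing : prism f g (coboundary φ) l = 0 := by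
    rw [prism_apply]
    refine Finset.sum_eq_zero fun i hi => ?_
    have hi := Finset.mem_range.1 hi
    rw [hφ _ (hfg l hl i hi) (by simp; omega), mul_zero]
  simpa [vanishing] using
    (congr_fun (coboundary_prism_add_prism_coboundary f g φ) l).symm

/-- The tuples of points of `X` whose pairwise distances are less than `ε`. -/
def smallTuples (X : Type*) [PseudoMetricSpace X] (ε : ℝ) : Set (List X) :=
  {l | ∀ a ∈ l, ∀ b ∈ l, dist a b < ε}

/-- The tuples of points of `S`. -/
def tuplesIn (S : Set X) : Set (List X) :=
  {l | ∀ a ∈ l, a ∈ S}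

variable [PseudoMetricSpace X] [PseudoMetricSpace Y]

theorem smallTuples_mono {ε ε' : ℝ} (h : ε ≤ ε') : smallTuples X ε ⊆ smallTuples X ε' :=
  fun _ hl a ha b hb => (hl a ha b hb).trans_le h

theorem mem_smallTuples_of_sublist {ε : ℝ} {l l' : List X} (hl : l ∈ smallTuples X ε)
    (h : l' <+ l) : l' ∈ smallTuples X ε :=
  fun a ha b hb => hl a (h.subset ha) b (h.subset hb)

theorem IsCocycleOn.mono_radius {r ε : ℝ} (hφ : IsCocycleOn (smallTuples X r) q φ) (h : ε ≤ r) :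
    IsCocycleOn (smallTuples X ε) q φ :=
  fun l hl => hφ l (smallTuples_mono h hl)

theorem exists_time_subdivision {r : ℝ} (hr : 0 < r) {S : Set Y} (hS : IsCompact S)
    {H : ℝ → Y → X} (hH : ContinuousOn (fun z : ℝ × Y => H z.1 z.2) (Set.Icc 0 1 ×ˢ S)) :
    ∃ δ > 0, ∃ M : ℕ, ∀ k i j : ℕ, k ≤ M → (i = k ∨ i = k + 1) → (j = k ∨ j = k + 1) →
      ∀ a ∈ S, ∀ b ∈ S, dist a b < δ → dist (H (i / (M + 1)) a) (H (j / (M + 1)) b) < r := by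
  obtain ⟨δ, hδ, hδH⟩ := Metric.uniformContinuousOn_iff.1
    ((isCompact_Icc.prod hS).uniformContinuousOn_of_continuous hH) r hr
  obtain ⟨M, hM⟩ := exists_nat_one_div_lt hδ
  refine ⟨δ, hδ, M, fun k i j hk hi hj a ha b hb hab => ?_⟩
  have hM₀ : (0 : ℝ) < M + 1 := by positivity
  have time_mem {k : ℕ} (hk : k ≤ M + 1) : (k / (M + 1) : ℝ) ∈ Set.Icc (0 : ℝ) 1 :=
    ⟨by positivity, (div_le_one hM₀).2 (mod_cast hk)⟩
  refine hδH (i / (M + 1), a) ⟨time_mem (by omega), ha⟩ (j / (M + 1), b)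
    ⟨time_mem (by omega), hb⟩ ?_
  rw [Prod.dist_eq, max_lt_iff, Real.dist_eq, ← sub_div, abs_div, abs_of_pos hM₀]
  refine ⟨lt_of_le_of_lt ?_ hM, hab⟩
  gcongr
  rcases hi with rfl | rfl <;> rcases hj with rfl | rfl <;> simp

theorem cohomologousOn_pullback_of_homotopy {r : ℝ} (hr : 0 < r)
    (hφ : IsCocycleOn (smallTuples X r) q φ) {S : Set Y} (hS : IsCompact S) {H : ℝ → Y → X}
    (hH : ContinuousOn (fun z : ℝ × Y => H z.1 z.2) (Set.Icc 0 1 ×ˢ S)) :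
    ∀ᶠ ε in 𝓝[>] (0 : ℝ), CohomologousOn (smallTuples Y ε ∩ tuplesIn S) q
      (pullback (H 0) φ) (pullback (H 1) φ) := by
  obtain ⟨δ, hδ, M, dist_lt⟩ := exists_time_subdivision hr hS hH
  filter_upwards [Ioc_mem_nhdsGT hδ] with ε hε
  have chain (k : ℕ) (hk : k ≤ M + 1) : CohomologousOn (smallTuples Y ε ∩ tuplesIn S) q
      (pullback (H 0) φ) (pullback (H (k / (M + 1))) φ) := by
    induction k with
    | zero => exact .of_eq fun l _ _ => by simp
    | succ k ih =>
      refine (ih (by omega)).trans (.pullback_of_contiguous hφ fun l ⟨hl, hlS⟩ i _ => ?_)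
      have mem_map {y : X} (hy : y ∈ (l.take (i + 1)).map (H (k / (M + 1))) ++
          (l.drop i).map (H ((k + 1 : ℕ) / (M + 1)))) :
          ∃ j : ℕ, (j = k ∨ j = k + 1) ∧ ∃ a ∈ l, H (j / (M + 1)) a = y := by
        rcases mem_append.1 hy with hy | hy <;> obtain ⟨a, ha, hay⟩ := List.mem_map.1 hy
        · exact ⟨k, .inl rfl, a, mem_of_mem_take ha, hay⟩
        · exact ⟨k + 1, .inr rfl, a, mem_of_mem_drop ha, hay⟩
      intro y hy z hz
      obtain ⟨i, hi, a, ha, rfl⟩ := mem_map hy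
      obtain ⟨j, hj, b, hb, rfl⟩ := mem_map hz
      exact dist_lt k i j (by omega) hi hj a (hlS a ha) b (hlS b hb) ((hl a ha b hb).trans_le hε.2)
  simpa [div_self (Nat.cast_add_one_ne_zero M : (M + 1 : ℝ) ≠ 0)] using chain (M + 1) le_rfl

end Homotopy

section ZeroDivisor

variable {R X : Type*} [CommRing R] {m n k : ℕ} {φ : TupleCochain R X}

/-- The zero divisor `π_c^* φ - π_{c'}^* φ` on `X^n`, where `π_c : X^n → X` is the projection
to the coordinate `c`. -/
def zeroDivisor (φ : TupleCochain R X) (c c' : Fin n) : TupleCochain R (Fin n → X) :=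
  pullback (Function.eval c) φ - pullback (Function.eval c') φ

variable [PseudoMetricSpace X]

theorem IsCocycleOn.pullback_eval {r : ℝ} (hφ : IsCocycleOn (smallTuples X r) m φ) (c : Fin n) :
    IsCocycleOn (smallTuples (Fin n → X) r) m (pullback (Function.eval c) φ) := fun l hl hlen => by
  rw [coboundary_pullback, pullback_apply]
  refine hφ _ (fun a ha b hb => ?_) (by simpa using hlen)
  obtain ⟨x, hx, rfl⟩ := List.mem_map.1 ha
  obtain ⟨y, hy, rfl⟩ := List.mem_map.1 hb
  exact (dist_le_pi_dist x y c).trans_lt (hl x hx y hy)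

theorem IsCocycleOn.zeroDivisor {r : ℝ} (hφ : IsCocycleOn (smallTuples X r) m φ) (c c' : Fin n) :
    IsCocycleOn (smallTuples (Fin n → X) r) m (zeroDivisor φ c c') := fun l hl hlen => by
  rw [TupleCochain.zeroDivisor, map_sub, Pi.sub_apply, hφ.pullback_eval c l hl hlen,
    hφ.pullback_eval c' l hl hlen, sub_zero]

theorem zeroDivisor_cohomologousOn_zero {r : ℝ} (hr : 0 < r)
    (hφ : IsCocycleOn (smallTuples X r) m φ) {V S : Set (Fin n → X)} (hS : IsCompact S)
    (hSV : S ⊆ V) {s : C(V, C(unitInterval, X))}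
    (hs : ∀ x : V, ∀ j : Fin n, s x (evalPt n j) = (x : Fin n → X) j) (c c' : Fin n) :
    ∀ᶠ ε in 𝓝[>] (0 : ℝ),
      CohomologousOn (smallTuples (Fin n → X) ε ∩ tuplesIn S) m (zeroDivisor φ c c') 0 := by
  classical
  let time (t : ℝ) : unitInterval :=
    Set.projIcc 0 1 zero_le_one ((1 - t) * evalPt n c + t * evalPt n c')
  let H (t : ℝ) (x : Fin n → X) : X := if hx : x ∈ V then s ⟨x, hx⟩ (time t) else x c
  have hH : ContinuousOn (fun z : ℝ × (Fin n → X) => H z.1 z.2) (Set.Icc 0 1 ×ˢ S) := by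
    rw [continuousOn_iff_continuous_domRestrict]
    have restrict_eq : (Set.Icc (0 : ℝ) 1 ×ˢ S).domRestrict (fun z => H z.1 z.2) =
        fun z => s ⟨z.1.2, hSV z.2.2⟩ (time z.1.1) := funext fun z => dif_pos (hSV z.2.2)
    have point_continuous : Continuous fun z : (Set.Icc (0 : ℝ) 1 ×ˢ S : Set (ℝ × (Fin n → X))) =>
        (⟨z.1.2, hSV z.2.2⟩ : V) := Continuous.subtype_mk (by fun_prop) _
    have time_continuous : Continuous time := continuous_projIcc.comp (by fun_prop)
    rw [restrict_eq]
    exact (s.continuous.comp point_continuous).eval (time_continuous.comp (by fun_prop))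
  have H_zero {x : Fin n → X} (hx : x ∈ S) : H 0 x = x c := by
    simp [H, hSV hx, time, Set.projIcc_val, hs]
  have H_one {x : Fin n → X} (hx : x ∈ S) : H 1 x = x c' := by
    simp [H, hSV hx, time, Set.projIcc_val, hs]
  filter_upwards [cohomologousOn_pullback_of_homotopy hr hφ hS hH] with ε ⟨η, hη, hHφ⟩
  refine ⟨η, hη, fun l hl hlen => ?_⟩
  rw [← hHφ l hl hlen, Pi.zero_apply, sub_zero]
  simp only [zeroDivisor, Pi.sub_apply, pullback_apply]
  congr 2 <;> refine List.map_congr_left fun x hx => ?_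
  · exact (H_zero (hl.2 x hx)).symm
  · exact (H_one (hl.2 x hx)).symm

/-- A small tuple lies in one of the `k` open sets, on which one of the zero divisors is a
coboundary; correcting each factor by its coboundary makes the product vanish on the tuple. -/
theorem cupProd_zeroDivisor_cohomologousOn_zero [CompactSpace X] (h : HasPlanners X n k) {r : ℝ}
    (hr : 0 < r) (hφ : IsCocycleOn (smallTuples X r) m φ) (c c' : Fin k → Fin n) :
    ∀ᶠ ε in 𝓝[>] (0 : ℝ), CohomologousOn (smallTuples (Fin n → X) ε) (k * m)
      (cupProd m fun i => zeroDivisor φ (c i) (c' i)) 0 := by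
  obtain ⟨U, hU, hcov, hs⟩ := h
  choose s hs using hs
  obtain ⟨V, hVcov, hV, hVU⟩ := exists_iUnion_eq_closure_subset hU (fun x => Set.toFinite _) hcov
  obtain ⟨δ, hδ, hleb⟩ := lebesgue_number_lemma_of_metric (isCompact_univ (X := Fin n → X)) hV
    hVcov.ge
  filter_upwards [Ioc_mem_nhdsGT hr, Ioc_mem_nhdsGT hδ, eventually_all.2 fun i =>
    zeroDivisor_cohomologousOn_zero hr hφ isClosed_closure.isCompact (hVU i) (hs i) (c i) (c' i)]
    with ε hεr hεδ hexact
  choose η hη hexact using hexact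
  have cocycle (i : Fin k) : IsCocycleOn (smallTuples (Fin n → X) ε) m
      (zeroDivisor φ (c i) (c' i)) := (hφ.mono_radius hεr.2).zeroDivisor (c i) (c' i)
  have correction (i : Fin k) : CohomologousOn (smallTuples (Fin n → X) ε) m
      (zeroDivisor φ (c i) (c' i)) (zeroDivisor φ (c i) (c' i) - coboundary (η i)) :=
    ⟨η i, hη i, fun l _ _ => by simp⟩
  refine (CohomologousOn.cupProd (fun l hl l' => mem_smallTuples_of_sublist hl) cocycle
    (fun i => (cocycle i).sub_coboundary (η i)) correction).trans (.of_eq fun l hl hlen => ?_)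
  obtain ⟨x, l', rfl⟩ := exists_cons_of_length_pos (by omega : 0 < l.length)
  obtain ⟨i, hi⟩ := hleb x (Set.mem_univ x)
  have block_sublist : (((x :: l').drop (i * m)).take (m + 1)) <+ x :: l' :=
    (take_sublist _ _).trans (drop_sublist _ _)
  have block_length : (((x :: l').drop (i * m)).take (m + 1)).length = m + 1 := by
    have : (i + 1) * m ≤ k * m := Nat.mul_le_mul_right m i.isLt
    rw [add_mul, one_mul] at this
    rw [length_take, length_drop, hlen]
    omega
  refine Finset.prod_eq_zero (Finset.mem_univ i) ?_
  change zeroDivisor φ (c i) (c' i) _ - coboundary (η i) _ = 0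
  rw [← hexact i _ ⟨mem_smallTuples_of_sublist hl block_sublist, fun a ha => ?_⟩
    block_length, Pi.zero_apply, sub_zero, sub_self]
  exact subset_closure (hi ((hl a (block_sublist.subset ha) x (by simp)).trans_le hεδ.2))

end ZeroDivisor

end TupleCochain

/-! ### The fundamental cycle of a discrete torus -/

section DiscreteTorus

open Equiv TupleCochain

variable {N K : ℕ}

/-- The `k`-th vertex of the Freudenthal simplex at the point `p` of the discrete torus
`(ℤ/K)^N`: starting from `p`, move one unit in the directions `τ 0, …, τ (k - 1)`. -/
def freudenthalVertex (p : Fin N → ZMod K) (τ : Perm (Fin N)) (k : ℕ) : Fin N → ZMod K :=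
  fun x => p x + if (τ.symm x : ℕ) < k then 1 else 0

theorem freudenthalVertex_succ (p : Fin N → ZMod K) (τ : Perm (Fin N)) (k : Fin N) :
    freudenthalVertex p τ (k + 1) = freudenthalVertex p τ k + Pi.single (τ k) 1 := by
  ext x
  obtain ⟨y, rfl⟩ := τ.surjective x
  obtain hyk | rfl | hky := lt_trichotomy y k
  · simp [freudenthalVertex, hyk, hyk.ne, Nat.lt_succ_of_lt (Fin.lt_def.1 hyk)]
  · simp [freudenthalVertex]
  · simp [freudenthalVertex, hky.not_gt, hky.ne', (Nat.succ_le_of_lt (Fin.lt_def.1 hky)).not_gt]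

theorem eq_freudenthalVertex_one {q : Fin (N + 1) → Fin N → ZMod K}
    (hq : ∀ r : Fin N, q r.succ = q r.castSucc + Pi.single r 1) :
    q = fun r : Fin (N + 1) => freudenthalVertex (q 0) 1 r := by
  funext r
  induction r using Fin.induction with
  | zero => ext x; simp [freudenthalVertex]
  | succ r ih =>
    rw [hq, ih, Fin.val_succ, freudenthalVertex_succ]
    rfl

theorem freudenthalVertex_mul_swap (p : Fin N → ZMod K) (τ : Perm (Fin N)) {a b : Fin N}
    (hab : (b : ℕ) = a + 1) {k : ℕ} (hk : k ≠ b) :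
    freudenthalVertex p (τ * swap a b) k = freudenthalVertex p τ k := by
  ext x
  have symm_lt_iff : (swap a b (τ.symm x) : ℕ) < k ↔ (τ.symm x : ℕ) < k := by
    rw [swap_apply_def]
    split_ifs with ha hb
    · rw [ha]; omega
    · rw [hb]; omega
    · rfl
  simp [freudenthalVertex, Perm.mul_def, symm_lt_iff]

theorem freudenthalVertex_mul_finRotate (p : Fin (N + 1) → ZMod K) (τ : Perm (Fin (N + 1)))
    {k : ℕ} (hk : k ≤ N) :
    freudenthalVertex (p + Pi.single (τ 0) 1) (τ * finRotate (N + 1)) k =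
      freudenthalVertex p τ (k + 1) := by
  ext x
  obtain ⟨y, rfl⟩ := τ.surjective x
  refine Fin.cases ?_ (fun j => ?_) y
  · have symm_zero : (finRotate (N + 1)).symm 0 = Fin.last N := by
      rw [symm_apply_eq, finRotate_last]
    simp [freudenthalVertex, Perm.mul_def, symm_zero, hk]
  · have symm_succ : (finRotate (N + 1)).symm j.succ = j.castSucc := by
      rw [symm_apply_eq, finRotate_apply, Fin.coeSucc_eq_succ]
    simp [freudenthalVertex, Perm.mul_def, symm_succ]

variable {R : Type*} [CommRing R] [NeZero K]

/-- Evaluation of a cochain on the fundamental cycle of the discrete torus `(ℤ/K)^N`, the signed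
sum of all its Freudenthal simplices. -/
def torusEval (φ : TupleCochain R (Fin N → ZMod K)) : R :=
  ∑ p : Fin N → ZMod K, ∑ τ : Perm (Fin N),
    Perm.sign τ • φ (List.ofFn fun k : Fin (N + 1) => freudenthalVertex p τ k)

/-- The sum of the values of a cochain on the `k`-th faces of all Freudenthal simplices. -/
def torusFaceSum (ψ : TupleCochain R (Fin (N + 1) → ZMod K)) (k : Fin (N + 2)) : R :=
  ∑ p : Fin (N + 1) → ZMod K, ∑ τ : Perm (Fin (N + 1)),
    Perm.sign τ • ψ (List.ofFn fun j : Fin (N + 1) => freudenthalVertex p τ (k.succAbove j))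

theorem torusFaceSum_inner (ψ : TupleCochain R (Fin (N + 1) → ZMod K)) (k : Fin N) :
    torusFaceSum ψ k.succ.castSucc = 0 := by
  refine Finset.sum_eq_zero fun p _ => ?_
  have swap_ne_one : swap k.castSucc k.succ ≠ 1 := by
    simpa [swap_eq_one_iff] using k.castSucc_lt_succ.ne
  refine Finset.sum_involution (fun τ _ => τ * swap k.castSucc k.succ) (fun τ _ => ?_)
    (fun τ _ _ => by simpa using swap_ne_one) (fun τ _ => Finset.mem_univ _)
    fun τ _ => by simp [mul_assoc]
  have same_face (j : Fin (N + 1)) :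
      freudenthalVertex p (τ * swap k.castSucc k.succ) (k.succ.castSucc.succAbove j) =
        freudenthalVertex p τ (k.succ.castSucc.succAbove j) :=
    freudenthalVertex_mul_swap p τ (by simp) fun h =>
      Fin.succAbove_ne k.succ.castSucc j (Fin.ext (by simpa using h))
  simp only [same_face, Perm.sign_mul, Perm.sign_swap k.castSucc_lt_succ.ne, mul_neg, mul_one,
    Units.neg_smul, add_neg_cancel]

theorem torusFaceSum_last (ψ : TupleCochain R (Fin (N + 1) → ZMod K)) :
    torusFaceSum ψ (Fin.last (N + 1)) = (-1) ^ N * torusFaceSum ψ 0 := by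
  simp only [torusFaceSum, Finset.sum_comm (s := (Finset.univ : Finset (Fin (N + 1) → ZMod K))),
    Finset.mul_sum]
  symm
  refine Fintype.sum_equiv (Equiv.mulRight (finRotate (N + 1))) _ _ fun τ => ?_
  refine Fintype.sum_equiv (Equiv.addRight (Pi.single (τ 0) 1)) _ _ fun p => ?_
  have same_face (j : Fin (N + 1)) := freudenthalVertex_mul_finRotate p τ j.is_le
  have val_succ (j : Fin (N + 1)) : ((Fin.last (N + 1)).succAbove j : ℕ) = j := by simp
  have val_zero (j : Fin (N + 1)) : ((0 : Fin (N + 2)).succAbove j : ℕ) = j + 1 := by simp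
  simp only [val_succ, val_zero, coe_mulRight, coe_addRight, same_face, Perm.sign_mul,
    sign_finRotate, Nat.add_sub_cancel, Units.smul_def, Units.val_mul, Units.val_pow_eq_pow_val,
    Units.val_neg, Units.val_one, zsmul_eq_mul]
  push_cast
  ring

theorem torusEval_coboundary (ψ : TupleCochain R (Fin (N + 1) → ZMod K)) :
    torusEval (coboundary ψ) = 0 := by
  have eval_eq : torusEval (coboundary ψ) =
      ∑ k : Fin (N + 2), (-1) ^ (k : ℕ) * torusFaceSum ψ k := by
    simp only [torusEval, torusFaceSum, coboundary_ofFn, Finset.mul_sum, Finset.smul_sum,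
      mul_smul_comm, Function.comp_def]
    simp only [Finset.sum_comm (t := (Finset.univ : Finset (Fin (N + 2))))]
  rw [eval_eq, Fin.sum_univ_castSucc, Fin.sum_univ_succ]
  simp only [torusFaceSum_inner, Fin.castSucc_zero, Fin.val_zero, pow_zero, one_mul, mul_zero,
    Finset.sum_const_zero, add_zero, torusFaceSum_last, Fin.val_last, ← mul_assoc]
  rw [← pow_add, Odd.neg_one_pow ⟨N, by ring⟩]
  ring

theorem torusEval_eq_zero_of_cohomologousOn {φ : TupleCochain R (Fin N → ZMod K)}
    {G : Set (List (Fin N → ZMod K))}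
    (hG : ∀ p τ, (List.ofFn fun k : Fin (N + 1) => freudenthalVertex p τ k) ∈ G)
    (h : CohomologousOn G N φ 0) : torusEval φ = 0 := by
  cases N with
  | zero =>
    exact Finset.sum_eq_zero fun p _ => Finset.sum_eq_zero fun τ _ => by
      rw [h.eq_of_length_eq_one (hG p τ) (by simp), Pi.zero_apply, smul_zero]
  | succ N =>
    obtain ⟨η, -, hη⟩ := h
    rw [← torusEval_coboundary η]
    refine Finset.sum_congr rfl fun p _ => Finset.sum_congr rfl fun τ _ => ?_
    rw [← hη _ (hG p τ) (by simp), Pi.zero_apply, sub_zero]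

end DiscreteTorus

/-! ### A fundamental cocycle of the sphere -/

section ColoringCochain

open TupleCochain

variable {X : Type*} {m : ℕ}

/-- The cochain attached to a colouring `κ` by `m + 2` colours: it takes the value `± 1` on the
`m + 1`-tuples whose colours are exactly the first `m + 1` ones, according to the parity of their
order, and `0` on all others. It is the pullback along `κ` of the simplicial cocycle of
`∂Δ^(m + 1)` dual to the facet that omits the last vertex. -/
def coloringCochain (κ : X → Fin (m + 2)) : TupleCochain ℤ X := fun l =>
  Matrix.det (Matrix.of fun i j : Fin (m + 1) =>
    if (l[(i : ℕ)]?).map κ = some j.castSucc then 1 else 0)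

variable (κ : X → Fin (m + 2))

theorem coloringCochain_ofFn (v : Fin (m + 1) → X) :
    coloringCochain κ (List.ofFn v) =
      Matrix.det (Matrix.of fun i j : Fin (m + 1) =>
        if κ (v i) = j.castSucc then (1 : ℤ) else 0) := by
  simp [coloringCochain, Fin.is_le, -List.ofFn_succ]

theorem coboundary_coloringCochain_eq_zero {v : Fin (m + 2) → X}
    (hv : ¬ Function.Surjective (κ ∘ v)) :
    coboundary (coloringCochain κ) (List.ofFn v) = 0 := by
  rw [← Finite.injective_iff_surjective] at hv
  obtain ⟨a, b, hab, hne⟩ : ∃ a b, κ (v a) = κ (v b) ∧ a ≠ b := by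
    simpa [Function.Injective] using hv
  let colorMatrix : Matrix (Fin (m + 2)) (Fin (m + 2)) ℤ := Matrix.of fun i =>
    Fin.cons 1 fun j : Fin (m + 1) => if κ (v i) = j.castSucc then 1 else 0
  have det_eq_zero : colorMatrix.det = 0 :=
    Matrix.det_zero_of_row_eq hne (by ext j; simp [colorMatrix, hab])
  rw [coboundary_ofFn, ← det_eq_zero, Matrix.det_succ_column_zero]
  refine Finset.sum_congr rfl fun k _ => ?_
  simp only [coloringCochain_ofFn, colorMatrix, Matrix.of_apply, Fin.cons_zero, mul_one]
  rfl

theorem exists_injective_of_coloringCochain_ne_zero {v : Fin (m + 1) → X}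
    (hv : coloringCochain κ (List.ofFn v) ≠ 0) :
    ∃ c : Fin (m + 1) → Fin (m + 1), Function.Injective c ∧ ∀ i, κ (v i) = (c i).castSucc := by
  rw [coloringCochain_ofFn] at hv
  have ne_last (i : Fin (m + 1)) : κ (v i) ≠ Fin.last (m + 1) := fun h =>
    hv (Matrix.det_eq_zero_of_row_eq_zero i fun j => by simp [h, (Fin.castSucc_lt_last j).ne'])
  choose c hc using fun i => Fin.exists_castSucc_eq.2 (ne_last i)
  refine ⟨c, fun i j hij => ?_, fun i => (hc i).symm⟩
  by_contra hne
  exact hv (Matrix.det_zero_of_row_eq hne (by ext k; simp [← hc, hij]))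

theorem coloringCochain_eq_one {v : Fin (m + 1) → X} (hv : ∀ i, κ (v i) = i.castSucc) :
    coloringCochain κ (List.ofFn v) = 1 := by
  rw [coloringCochain_ofFn, ← Matrix.det_one (n := Fin (m + 1))]
  congr 1
  ext i j
  simp [hv, Matrix.one_apply]

end ColoringCochain

section SphereCocycle

open TupleCochain

variable {m : ℕ}

/-- The index of the first negative coordinate of a point of the sphere, and `m + 1` if all
coordinates are nonnegative. -/
def sphereColor (x : Sph m) : Fin (m + 2) :=
  {i | x.1 i < 0}.toFinset.inf Fin.castSucc

theorem sphereColor_le_castSucc_iff {x : Sph m} {i : Fin (m + 1)} :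
    sphereColor x ≤ i.castSucc ↔ ∃ j ≤ i, x.1 j < 0 := by
  rw [sphereColor, Finset.inf_le_iff (Fin.castSucc_lt_last i)]
  simp [and_comm]

theorem sphereColor_eq_last_iff {x : Sph m} :
    sphereColor x = Fin.last (m + 1) ↔ ∀ i, 0 ≤ x.1 i := by
  rw [← not_iff_not, ← ne_eq, ← Fin.lt_last_iff_ne_last]
  have key := sphereColor_le_castSucc_iff (x := x) (i := Fin.last m)
  rw [Fin.le_castSucc_iff] at key
  simpa [Fin.le_last] using key

theorem sphereColor_eq_castSucc_iff {x : Sph m} {i : Fin (m + 1)} :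
    sphereColor x = i.castSucc ↔ x.1 i < 0 ∧ ∀ j < i, 0 ≤ x.1 j := by
  have not_le_iff (j : Fin (m + 1)) : j.castSucc < sphereColor x ↔ ∀ k ≤ j, 0 ≤ x.1 k := by
    simpa using sphereColor_le_castSucc_iff (x := x) (i := j).not
  refine ⟨fun h => ?_, fun ⟨hi, hlt⟩ => le_antisymm (sphereColor_le_castSucc_iff.2 ⟨i, le_rfl, hi⟩)
    (le_of_not_gt fun h => ?_)⟩
  · have nonneg : ∀ j < i, 0 ≤ x.1 j := fun j hj =>
      (not_le_iff j).1 (by rwa [h, Fin.castSucc_lt_castSucc_iff]) j le_rfl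
    obtain ⟨j, hj, hneg⟩ := sphereColor_le_castSucc_iff.1 h.le
    obtain rfl | hj := hj.eq_or_lt
    · exact ⟨hneg, nonneg⟩
    · exact absurd hneg (nonneg j hj).not_gt
  · obtain ⟨j, hj⟩ := Fin.exists_castSucc_eq.2 (h.trans_le (Fin.le_last _)).ne
    rw [← hj, Fin.castSucc_lt_castSucc_iff] at h
    obtain ⟨k, hk, hneg⟩ := sphereColor_le_castSucc_iff.1 hj.ge
    exact absurd hneg (hlt k (hk.trans_lt h)).not_gt

theorem not_surjective_sphereColor_comp {ι : Type*} {v : ι → Sph m}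
    (hv : ∀ i j, dist (v i) (v j) < 1 / (m + 1)) : ¬ Function.Surjective (sphereColor ∘ v) := by
  intro surj
  obtain ⟨b, hb⟩ := surj (Fin.last _)
  have nonneg := sphereColor_eq_last_iff.1 hb
  have lt_div (i : Fin (m + 1)) : (v b).1 i < 1 / (m + 1) := by
    obtain ⟨a, ha⟩ := surj i.castSucc
    have neg := (sphereColor_eq_castSucc_iff.1 ha).1
    have sub_le : (v b).1 i - (v a).1 i ≤ dist (v b) (v a) := by
      rw [Subtype.dist_eq, dist_eq_norm]
      exact (le_abs_self _).trans (PiLp.norm_apply_le ((v b).1 - (v a).1) i)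
    linarith [hv b a]
  have hm : (0 : ℝ) < m + 1 := by positivity
  have div_le_one : 1 / ((m : ℝ) + 1) ≤ 1 := (div_le_one hm).2 (by simp)
  have norm_sq_lt : ‖(v b).1‖ ^ 2 < 1 := calc
    ‖(v b).1‖ ^ 2 = ∑ i, (v b).1 i ^ 2 := EuclideanSpace.real_norm_sq_eq _
    _ < ∑ _i : Fin (m + 1), 1 / ((m : ℝ) + 1) :=
      Finset.sum_lt_sum_of_nonempty Finset.univ_nonempty fun i _ => by
        nlinarith [nonneg i, lt_div i]
    _ = 1 := by simp [hm.ne']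
  simp [norm_eq_of_mem_sphere] at norm_sq_lt

/-- The cochain of degree `m` on tuples of points of `S^m` that represents, on small tuples, the
fundamental class of the sphere. -/
def sphereCochain (m : ℕ) : TupleCochain ℤ (Sph m) :=
  coloringCochain sphereColor

theorem isCocycleOn_sphereCochain (m : ℕ) :
    IsCocycleOn (smallTuples (Sph m) (1 / (m + 1))) m (sphereCochain m) := by
  intro l hl hlen
  obtain ⟨v, rfl⟩ : ∃ v : Fin (m + 2) → Sph m, l = List.ofFn v := by
    rw [← hlen]; exact ⟨l.get, (List.ofFn_get l).symm⟩
  exact coboundary_coloringCochain_eq_zero _ <| not_surjective_sphereColor_comp fun i j =>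
    hl _ (List.mem_ofFn.2 ⟨i, rfl⟩) _ (List.mem_ofFn.2 ⟨j, rfl⟩)

end SphereCocycle

/-! ### Collapsing a discrete torus onto the sphere -/

section TorusCollapse

open NormedSpace

variable {m : ℕ}

/-- The function `∏ (1 - Re zᵢ) / 2` on the torus; it vanishes exactly where some `zᵢ` is `1`. -/
def collapseRadius (z : Fin m → Circle) : ℝ :=
  ∏ i, (1 - (z i : ℂ).re) / 2

theorem collapseRadius_eq_zero {z : Fin m → Circle} {i : Fin m} (hi : z i = 1) :
    collapseRadius z = 0 :=
  Finset.prod_eq_zero (Finset.mem_univ i) (by simp [hi])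

theorem collapseRadius_pos {z : Fin m → Circle} (hz : ∀ i, z i ≠ 1) : 0 < collapseRadius z := by
  refine Finset.prod_pos fun i _ => half_pos (sub_pos.2 ?_)
  refine (((Complex.re_le_norm _).trans_eq (Circle.norm_coe _))).lt_of_ne fun h => hz i ?_
  have im_eq_zero : (z i : ℂ).im = 0 := by
    have := Circle.normSq_coe (z i)
    rw [Complex.normSq_apply, h] at this
    simpa using this
  exact Circle.ext (Complex.ext h im_eq_zero)

/-- The map from the torus `(S¹)^m` to `ℝ^(m+1) \ {0}` with coordinates `-ρ Im zᵢ` and `1/2 - ρ`,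
where `ρ` is `collapseRadius`. -/
def collapseVector (z : Fin m → Circle) : EuclideanSpace ℝ (Fin (m + 1)) :=
  WithLp.toLp 2 (Fin.snoc (α := fun _ => ℝ) (fun i => -(collapseRadius z * (z i : ℂ).im))
    (1 / 2 - collapseRadius z))

@[simp]
theorem collapseVector_castSucc (z : Fin m → Circle) (i : Fin m) :
    collapseVector z i.castSucc = -(collapseRadius z * (z i : ℂ).im) := by
  simp [collapseVector]

@[simp]
theorem collapseVector_last (z : Fin m → Circle) :
    collapseVector z (Fin.last m) = 1 / 2 - collapseRadius z := by
  simp [collapseVector]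

theorem continuous_collapseVector : Continuous (collapseVector (m := m)) := by
  unfold collapseVector collapseRadius
  refine (PiLp.continuous_toLp 2 _).comp (Continuous.finSnoc ?_ ?_) <;> fun_prop

theorem collapseVector_ne_zero (z : Fin m → Circle) : collapseVector z ≠ 0 := by
  intro h
  have radius_eq : collapseRadius z = 1 / 2 := by
    have := collapseVector_last z
    rw [h, PiLp.zero_apply] at this
    linarith
  have factor_eq_one (i : Fin m) : (1 - (z i : ℂ).re) / 2 = 1 := by
    have im_eq_zero : (z i : ℂ).im = 0 := by
      have := collapseVector_castSucc z i
      rw [h, PiLp.zero_apply, radius_eq] at this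
      linarith
    have re_sq : (z i : ℂ).re * (z i : ℂ).re = 1 := by
      simpa [Complex.normSq_apply, im_eq_zero] using Circle.normSq_coe (z i)
    obtain re_eq | re_eq := mul_self_eq_one_iff.1 re_sq
    · have : collapseRadius z = 0 :=
        collapseRadius_eq_zero (Circle.ext (Complex.ext re_eq im_eq_zero))
      linarith
    · norm_num [re_eq]
  norm_num [collapseRadius, factor_eq_one] at radius_eq

/-- The map from the torus `(S¹)^m` to `S^m` that collapses the points with some coordinate `1` to
a single point. -/
def torusCollapse (z : Fin m → Circle) : Sph m :=
  ⟨normalize (collapseVector z), by simpa using collapseVector_ne_zero z⟩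

theorem continuous_torusCollapse : Continuous (torusCollapse (m := m)) := by
  refine Continuous.subtype_mk ?_ _
  exact (continuous_collapseVector.norm.inv₀ fun z =>
    norm_ne_zero_iff.2 (collapseVector_ne_zero z)).smul continuous_collapseVector

theorem torusCollapse_neg_iff {z : Fin m → Circle} {j : Fin (m + 1)} :
    (torusCollapse z).1 j < 0 ↔ collapseVector z j < 0 := by
  have norm_pos : 0 < ‖collapseVector z‖⁻¹ := inv_pos.2 (norm_pos_iff.2 (collapseVector_ne_zero z))
  exact smul_neg_iff_of_pos_left norm_pos

theorem torusCollapse_nonneg_iff {z : Fin m → Circle} {j : Fin (m + 1)} :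
    0 ≤ (torusCollapse z).1 j ↔ 0 ≤ collapseVector z j := by
  simpa using torusCollapse_neg_iff.not

end TorusCollapse

section GridCollapse

open ZMod TupleCochain

variable {m h : ℕ}

theorem toCircle_im_pos_iff {a : ZMod (2 * h + 2)} (ha : a ≠ 0) :
    0 < (toCircle a : ℂ).im ↔ a.val ≤ h := by
  have val_pos : (0 : ℝ) < a.val := by exact_mod_cast Nat.pos_of_ne_zero ((val_ne_zero a).2 ha)
  have val_lt : (a.val : ℝ) < 2 * h + 2 := by exact_mod_cast a.val_lt
  have hh : (0 : ℝ) < h + 1 := by positivity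
  have im_eq : (toCircle a : ℂ).im = Real.sin (Real.pi * (a.val / (h + 1))) := by
    rw [toCircle_eq_circleExp, Circle.coe_exp, Complex.exp_ofReal_mul_I_im]
    push_cast
    congr 1
    field_simp
  rw [im_eq]
  have quotient_pos : 0 < (a.val : ℝ) / (h + 1) := by positivity
  have quotient_lt : (a.val : ℝ) / (h + 1) < 2 := by rw [div_lt_iff₀ hh]; linarith
  refine ⟨fun sin_pos => ?_, fun hle => ?_⟩
  · by_contra hlt
    have one_le : 1 ≤ (a.val : ℝ) / (h + 1) := by
      rw [le_div_iff₀ hh, one_mul]; exact_mod_cast not_le.1 hlt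
    have := Real.sin_nonneg_of_nonneg_of_le_pi
      (x := Real.pi * (a.val / (h + 1)) - Real.pi) (by nlinarith [Real.pi_pos])
      (by nlinarith [Real.pi_pos])
    rw [Real.sin_sub_pi] at this
    linarith
  · have lt_one : (a.val : ℝ) / (h + 1) < 1 := by
      rw [div_lt_one hh]; exact_mod_cast Nat.lt_succ_of_le hle
    exact Real.sin_pos_of_pos_of_lt_pi (mul_pos Real.pi_pos quotient_pos)
      (by nlinarith [Real.pi_pos])

/-- The collapse map on the discrete torus of roots of unity of even order. -/
def gridCollapse (q : Fin m → ZMod (2 * h + 2)) : Sph m :=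
  torusCollapse fun j => toCircle (q j)

theorem sphereColor_gridCollapse_of_eq_zero {q : Fin m → ZMod (2 * h + 2)} {j : Fin m}
    (hj : q j = 0) : sphereColor (gridCollapse q) = Fin.last (m + 1) := by
  have radius_eq_zero : collapseRadius (fun i => toCircle (q i)) = 0 :=
    collapseRadius_eq_zero (i := j) (by simp [hj])
  refine sphereColor_eq_last_iff.2 fun i => torusCollapse_nonneg_iff.2 ?_
  refine Fin.lastCases ?_ (fun i => ?_) i <;> simp [radius_eq_zero]

theorem gridCollapse_castSucc_neg_iff {q : Fin m → ZMod (2 * h + 2)} (hq : ∀ j, q j ≠ 0)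
    (j : Fin m) : (gridCollapse q).1 j.castSucc < 0 ↔ (q j).val ≤ h := by
  have radius_pos : 0 < collapseRadius (fun i => toCircle (q i)) :=
    collapseRadius_pos fun i hi => hq i (injective_toCircle (by simpa using hi))
  rw [gridCollapse, torusCollapse_neg_iff, collapseVector_castSucc, neg_lt_zero,
    mul_pos_iff_of_pos_left radius_pos, toCircle_im_pos_iff (hq j)]

theorem gridCollapse_antipode_last_neg {q : Fin m → ZMod (2 * h + 2)}
    (hq : ∀ j, q j = (h + 1 : ℕ)) : (gridCollapse q).1 (Fin.last m) < 0 := by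
  have toCircle_eq : (toCircle ((h + 1 : ℕ) : ZMod (2 * h + 2)) : ℂ) = -1 := by
    rw [toCircle_natCast, ← Complex.exp_pi_mul_I]
    congr 1
    have : (h : ℂ) + 1 ≠ 0 := by exact_mod_cast h.succ_ne_zero
    push_cast
    field_simp
  have radius_eq_one : collapseRadius (fun i => toCircle (q i)) = 1 := by
    simp only [collapseRadius, hq, toCircle_eq]
    norm_num
  rw [gridCollapse, torusCollapse_neg_iff, collapseVector_last, radius_eq_one]
  norm_num

theorem tendsto_toCircle_one :
    Filter.Tendsto (fun h : ℕ => toCircle (1 : ZMod (2 * h + 2))) Filter.atTop (nhds 1) := by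
  have toCircle_one (h : ℕ) :
      toCircle (1 : ZMod (2 * h + 2)) = Circle.exp (Real.pi * (1 / ((h : ℝ) + 1))) := by
    have : Fact (1 < 2 * h + 2) := ⟨by omega⟩
    rw [toCircle_eq_circleExp, val_one]
    congr 1
    push_cast
    field_simp
  simp only [toCircle_one]
  simpa [Function.comp_def] using (Circle.exp.continuous.tendsto (Real.pi * 0)).comp
    (tendsto_one_div_add_atTop_nhds_zero_nat.const_mul Real.pi)

theorem exists_dist_gridCollapse_lt (m : ℕ) {ε : ℝ} (hε : 0 < ε) :
    ∃ h : ℕ, 1 ≤ h ∧ ∀ q q' p : Fin m → ZMod (2 * h + 2),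
      (∀ j, q j = p j ∨ q j = p j + 1) → (∀ j, q' j = p j ∨ q' j = p j + 1) →
        dist (gridCollapse q) (gridCollapse q') < ε := by
  obtain ⟨δ, hδ, hcollapse⟩ := Metric.uniformContinuous_iff.1
    (CompactSpace.uniformContinuous_of_continuous (continuous_torusCollapse (m := m))) ε hε
  obtain ⟨h, hstep, hh⟩ := ((Metric.tendsto_nhds.1 tendsto_toCircle_one δ hδ).and
    (Filter.eventually_ge_atTop 1)).exists
  refine ⟨h, hh, fun q q' p hq hq' => hcollapse <| (dist_pi_lt_iff hδ).2 fun j => ?_⟩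
  have dist_step (a : ZMod (2 * h + 2)) : dist (toCircle (a + 1)) (toCircle a) < δ := by
    have dist_coe (z w : Circle) : dist z w = ‖(z : ℂ) - w‖ := dist_eq_norm (z : ℂ) w
    rw [dist_coe] at hstep ⊢
    rwa [AddChar.map_add_eq_mul, Circle.coe_mul, ← mul_sub_one, norm_mul, Circle.norm_coe, one_mul]
  obtain hj | hj := hq j <;> obtain hj' | hj' := hq' j <;> simp only [hj, hj']
  · simpa using hδ
  · simpa only [dist_comm] using dist_step (p j)
  · exact dist_step (p j)
  · simpa using hδ

end GridCollapse

section LatticePath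

open TupleCochain

variable {m K h : ℕ}

/-- A path in the discrete torus `(ℤ/K)^m`, with `m` steps, each of which either stays in place or
moves one unit in a single direction. -/
def IsLatticePath (q : Fin (m + 1) → Fin m → ZMod K) : Prop :=
  ∀ r : Fin m, q r.succ = q r.castSucc ∨ ∃ j, q r.succ = q r.castSucc + Pi.single j 1

theorem zmod_val_add_one {a : ZMod (K + 1)} (ha : a + 1 ≠ 0) : (a + 1).val = a.val + 1 := by
  have ne_last : a ≠ Fin.last K := fun h => ha (by rw [h]; exact Fin.last_add_one K)
  exact (Fin.val_add_one a).trans (if_neg ne_last)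

theorem IsLatticePath.monotone_val {q : Fin (m + 1) → Fin m → ZMod (K + 1)} (hq : IsLatticePath q)
    (hne : ∀ r j, q r j ≠ 0) (j : Fin m) : Monotone fun r => (q r j).val := by
  refine Fin.monotone_iff_le_succ.2 fun r => ?_
  have hne' := hne r.succ j
  obtain stay | ⟨i, step⟩ := hq r
  · rw [stay]
  · rw [step] at hne' ⊢
    obtain rfl | hij := eq_or_ne j i
    · simp only [Pi.add_apply, Pi.single_eq_same] at hne' ⊢
      rw [zmod_val_add_one hne']
      exact Nat.le_succ _
    · simp [hij]

theorem gridCollapse_ne_zero_of_sphereColor_eq {q : Fin m → ZMod (2 * h + 2)} {c : Fin (m + 1)}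
    (hc : sphereColor (gridCollapse q) = c.castSucc) (j : Fin m) : q j ≠ 0 := fun hj =>
  (Fin.castSucc_lt_last c).ne (hc.symm.trans (sphereColor_gridCollapse_of_eq_zero hj))

theorem IsLatticePath.sphereColor_eq {q : Fin (m + 1) → Fin m → ZMod (2 * h + 2)}
    (hq : IsLatticePath q)
    (hne : sphereCochain m (List.ofFn fun r => gridCollapse (q r)) ≠ 0) (r : Fin (m + 1)) :
    sphereColor (gridCollapse (q r)) = r.castSucc := by
  obtain ⟨c, hc, hcolor⟩ := exists_injective_of_coloringCochain_ne_zero _ hne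
  have ne_zero (r : Fin (m + 1)) := gridCollapse_ne_zero_of_sphereColor_eq (hcolor r)
  -- Along the path a negative coordinate other than the last one was negative from the start.
  have monotone_color : Monotone c := fun r r' hr => by
    rw [← Fin.castSucc_le_castSucc_iff, ← hcolor, sphereColor_le_castSucc_iff]
    obtain ⟨j, hj⟩ | hj := (c r').eq_castSucc_or_eq_last
    · have neg := (sphereColor_eq_castSucc_iff.1 (hcolor r')).1
      rw [hj, gridCollapse_castSucc_neg_iff (ne_zero r')] at neg
      refine ⟨j.castSucc, hj.ge, ?_⟩
      rw [gridCollapse_castSucc_neg_iff (ne_zero r)]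
      exact (hq.monotone_val ne_zero j hr).trans neg
    · exact ⟨c r, hj ▸ Fin.le_last _, (sphereColor_eq_castSucc_iff.1 (hcolor r)).1⟩
  have strictMono_color := monotone_color.strictMono_of_injective hc
  rw [hcolor, le_antisymm strictMono_color.apply_le strictMono_color.le_apply]

theorem IsLatticePath.eq_freudenthalVertex {q : Fin (m + 1) → Fin m → ZMod (2 * h + 2)}
    (hq : IsLatticePath q) (hcolor : ∀ r, sphereColor (gridCollapse (q r)) = r.castSucc) :
    q = fun r : Fin (m + 1) => freudenthalVertex (fun _ => (h : ZMod (2 * h + 2))) 1 r := by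
  have ne_zero (r : Fin (m + 1)) := gridCollapse_ne_zero_of_sphereColor_eq (hcolor r)
  have val_le (r : Fin m) : (q r.castSucc r).val ≤ h := by
    rw [← gridCollapse_castSucc_neg_iff (ne_zero _)]
    exact (sphereColor_eq_castSucc_iff.1 (hcolor _)).1
  have lt_val (r : Fin m) : h < (q r.succ r).val := by
    rw [← not_le, ← gridCollapse_castSucc_neg_iff (ne_zero _), not_lt]
    exact (sphereColor_eq_castSucc_iff.1 (hcolor _)).2 _ r.castSucc_lt_succ
  have step (r : Fin m) : q r.succ = q r.castSucc + Pi.single r 1 := by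
    have lt := (val_le r).trans_lt (lt_val r)
    obtain stay | ⟨i, step⟩ := hq r
    · exact absurd lt (by simp [stay])
    · obtain rfl | hir := eq_or_ne r i
      · exact step
      · exact absurd lt (by simp [step, hir])
  have base_eq : q 0 = fun _ => (h : ZMod (2 * h + 2)) := by
    ext j
    have val_eq : (q j.castSucc j).val = h := by
      have hne := ne_zero j.succ j
      have lt := lt_val j
      simp only [step, Pi.add_apply, Pi.single_eq_same] at hne lt
      rw [zmod_val_add_one hne] at lt
      exact le_antisymm (val_le j) (Nat.le_of_lt_succ lt)
    calc q 0 j = q j.castSucc j := by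
          simp [congr_fun (congr_fun (eq_freudenthalVertex_one step) j.castSucc) j,
            freudenthalVertex, ← Equiv.Perm.inv_def]
      _ = ((q j.castSucc j).val : ZMod (2 * h + 2)) := (ZMod.natCast_zmod_val _).symm
      _ = h := by rw [val_eq]
  rw [← base_eq]
  exact eq_freudenthalVertex_one step

theorem sphereColor_gridCollapse_freudenthalVertex (hh : 1 ≤ h) (r : Fin (m + 1)) :
    sphereColor (gridCollapse (freudenthalVertex (fun _ : Fin m => (h : ZMod (2 * h + 2))) 1 r)) =
      r.castSucc := by
  set q := freudenthalVertex (fun _ : Fin m => (h : ZMod (2 * h + 2))) 1 r with hq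
  have apply_eq (j : Fin m) : q j = ((h + if (j : ℕ) < r then 1 else 0 : ℕ) : ZMod _) := by
    simp [hq, freudenthalVertex, ← Equiv.Perm.inv_def]
  have val_eq (j : Fin m) : (q j).val = h + if (j : ℕ) < r then 1 else 0 := by
    rw [apply_eq, ZMod.val_natCast_of_lt]
    split_ifs <;> omega
  have ne_zero (j : Fin m) : q j ≠ 0 := by
    rw [← ZMod.val_ne_zero, val_eq]
    omega
  have neg_iff (j : Fin m) : (gridCollapse q).1 j.castSucc < 0 ↔ (r : ℕ) ≤ j := by
    rw [gridCollapse_castSucc_neg_iff ne_zero, val_eq]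
    split_ifs <;> omega
  refine sphereColor_eq_castSucc_iff.2 ⟨?_, fun j hj => ?_⟩
  · obtain ⟨j, rfl⟩ | rfl := r.eq_castSucc_or_eq_last
    · exact (neg_iff j).2 le_rfl
    · exact gridCollapse_antipode_last_neg fun j => by simp [apply_eq]
  · obtain ⟨j, rfl⟩ := Fin.exists_castSucc_eq.2 (hj.trans_le (Fin.le_last r)).ne
    exact not_lt.1 ((neg_iff j).not.2 (not_le.2 hj))

theorem IsLatticePath.sphereCochain_gridCollapse (hh : 1 ≤ h)
    {q : Fin (m + 1) → Fin m → ZMod (2 * h + 2)} (hq : IsLatticePath q) :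
    sphereCochain m (List.ofFn fun r => gridCollapse (q r)) =
      if q = fun r : Fin (m + 1) => freudenthalVertex (fun _ => (h : ZMod (2 * h + 2))) 1 r
      then 1 else 0 := by
  split_ifs with hstair
  · subst hstair
    exact coloringCochain_eq_one _ (sphereColor_gridCollapse_freudenthalVertex hh)
  · by_contra hne
    exact hstair (hq.eq_freudenthalVertex (hq.sphereColor_eq hne))

end LatticePath

/-! ### The lower bound -/

section LowerBound

open Equiv Filter List TupleCochain Topology

variable {m n h K : ℕ}

/-- The `i`-th block of `m` steps of the path of vertices of a Freudenthal simplex of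
`(ℤ/K)^(n * m)`, projected to the `c`-th factor `(ℤ/K)^m`. -/
def blockPath (p : Fin (n * m) → ZMod K) (τ : Perm (Fin (n * m))) (i c : Fin n)
    (r : Fin (m + 1)) : Fin m → ZMod K :=
  fun j => freudenthalVertex p τ (i * m + r) (finProdFinEquiv (c, j))

theorem blockPath_succ (p : Fin (n * m) → ZMod K) (τ : Perm (Fin (n * m))) (i c : Fin n)
    (r j : Fin m) :
    blockPath p τ i c r.succ j = blockPath p τ i c r.castSucc j +
      if finProdFinEquiv (c, j) = τ (finProdFinEquiv (i, r)) then 1 else 0 := by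
  have step := congr_fun (freudenthalVertex_succ p τ (finProdFinEquiv (i, r)))
    (finProdFinEquiv (c, j))
  simp only [finProdFinEquiv_apply_val, Pi.add_apply, Pi.single_apply] at step
  rw [blockPath, blockPath, ← show (r : ℕ) + m * i + 1 = i * m + r.succ by simp; ring, step,
    Fin.val_castSucc, mul_comm m, add_comm (r : ℕ)]

theorem isLatticePath_blockPath (p : Fin (n * m) → ZMod K) (τ : Perm (Fin (n * m)))
    (i c : Fin n) : IsLatticePath (blockPath p τ i c) := fun r => by
  obtain ⟨⟨c', j'⟩, hτ⟩ := finProdFinEquiv.surjective (τ (finProdFinEquiv (i, r)))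
  by_cases hc : c = c'
  · refine .inr ⟨j', ?_⟩
    ext j
    simp [blockPath_succ, ← hτ, hc, Pi.single_apply]
  · refine .inl ?_
    ext j
    simp [blockPath_succ, ← hτ, hc]

theorem blockPath_eq_freudenthalVertex_iff [Nontrivial (ZMod K)] {p : Fin (n * m) → ZMod K}
    {τ : Perm (Fin (n * m))} {i c : Fin n} {b : Fin m → ZMod K} :
    (blockPath p τ i c = fun r : Fin (m + 1) => freudenthalVertex b 1 r) ↔
      (∀ r, τ (finProdFinEquiv (i, r)) = finProdFinEquiv (c, r)) ∧
        ∀ j, p (finProdFinEquiv (c, j)) = b j := by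
  have blockPath_apply (hτ : ∀ r, τ (finProdFinEquiv (i, r)) = finProdFinEquiv (c, r))
      (r : Fin (m + 1)) (j : Fin m) : blockPath p τ i c r j =
        p (finProdFinEquiv (c, j)) + if (j : ℕ) < r then 1 else 0 := by
    rw [blockPath, freudenthalVertex, ← hτ, symm_apply_apply, finProdFinEquiv_apply_val]
    simp [mul_comm m, add_comm (j : ℕ)]
  have vertex_apply (r : Fin (m + 1)) (j : Fin m) :
      freudenthalVertex b 1 r j = b j + if (j : ℕ) < r then 1 else 0 := rfl
  constructor
  · intro heq
    have hτ (r : Fin m) : τ (finProdFinEquiv (i, r)) = finProdFinEquiv (c, r) := by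
      have step := blockPath_succ p τ i c r r
      simp only [heq, vertex_apply] at step
      by_contra hne
      simp [Ne.symm hne] at step
    refine ⟨hτ, fun j => ?_⟩
    have start := blockPath_apply hτ 0 j
    rw [heq] at start
    simpa using start.symm.trans (vertex_apply 0 j)
  · rintro ⟨hτ, hp⟩
    ext r j
    rw [blockPath_apply hτ, vertex_apply, hp]

/-- The pullback of `sphereCochain m` along the collapse of the `c`-th factor of the discrete
torus `((ℤ/(2h+2))^m)^n`, whose coordinates are enumerated by `finProdFinEquiv`. -/
def gridSphereCochain (m n h : ℕ) (c : Fin n) :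
    TupleCochain ℤ (Fin (n * m) → ZMod (2 * h + 2)) :=
  pullback (fun p => gridCollapse fun j => p (finProdFinEquiv (c, j))) (sphereCochain m)

theorem cupProd_gridSphereCochain_freudenthalVertex (hh : 1 ≤ h) (c : Fin n → Fin n)
    (p : Fin (n * m) → ZMod (2 * h + 2)) (τ : Perm (Fin (n * m))) :
    cupProd m (fun i => gridSphereCochain m n h (c i))
        (ofFn fun k : Fin (n * m + 1) => freudenthalVertex p τ k) =
      if (∀ i r, τ (finProdFinEquiv (i, r)) = finProdFinEquiv (c i, r)) ∧ p = fun _ => (h : ZMod _)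
      then 1 else 0 := by
  have : Fact (1 < 2 * h + 2) := ⟨by omega⟩
  have block_value (i : Fin n) : gridSphereCochain m n h (c i)
      (ofFn fun r : Fin (m + 1) => freudenthalVertex p τ (i * m + r)) =
        if (∀ r, τ (finProdFinEquiv (i, r)) = finProdFinEquiv (c i, r)) ∧
          ∀ j, p (finProdFinEquiv (c i, j)) = h then 1 else 0 := by
    rw [gridSphereCochain, pullback_apply, map_ofFn]
    exact ((isLatticePath_blockPath p τ i (c i)).sphereCochain_gridCollapse hh).trans
      (if_congr blockPath_eq_freudenthalVertex_iff rfl rfl)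
  rw [cupProd_ofFn]
  simp only [block_value, Finset.prod_ite_zero, Finset.prod_const_one, Finset.mem_univ,
    forall_const, forall_and]
  refine if_congr (and_congr_right fun hτ => ⟨fun hp => ?_, fun hp => by simp [hp]⟩) rfl rfl
  ext x
  obtain ⟨⟨d, j⟩, rfl⟩ := finProdFinEquiv.surjective x
  obtain ⟨y, hy⟩ := τ.surjective (finProdFinEquiv (d, j))
  obtain ⟨⟨i, r⟩, rfl⟩ := finProdFinEquiv.surjective y
  obtain ⟨rfl, rfl⟩ := Prod.ext_iff.1 (finProdFinEquiv.injective ((hτ i r).symm.trans hy))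
  exact hp i r

theorem torusEval_cupProd_gridSphereCochain_perm (hme : Even m) (hh : 1 ≤ h)
    (π : Perm (Fin n)) : torusEval (cupProd m fun i => gridSphereCochain m n h (π i)) = 1 := by
  set π' : Perm (Fin (n * m)) := finProdFinEquiv.permCongr (prodCongrLeft fun _ => π) with hπ'
  have eq_iff (τ : Perm (Fin (n * m))) :
      (∀ i r, τ (finProdFinEquiv (i, r)) = finProdFinEquiv (π i, r)) ↔ τ = π' := by
    rw [Equiv.ext_iff, ← finProdFinEquiv.forall_congr_right, Prod.forall]
    simp only [hπ', permCongr_apply, symm_apply_apply, prodCongrLeft_apply]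
  have sign_eq : Perm.sign π' = 1 := by
    rw [Perm.sign_permCongr, Perm.sign_prodCongrLeft, Finset.prod_const, Finset.card_univ,
      Fintype.card_fin, Int.units_pow_eq_pow_mod_two, Nat.even_iff.1 hme, pow_zero]
  simp only [torusEval, cupProd_gridSphereCochain_freudenthalVertex hh, eq_iff, ite_and]
  simp [sign_eq]

theorem torusEval_cupProd_gridSphereCochain_of_not_bijective (hm : 1 ≤ m) (hh : 1 ≤ h)
    {c : Fin n → Fin n} (hc : ¬ Function.Bijective c) :
    torusEval (cupProd m fun i => gridSphereCochain m n h (c i)) = 0 := by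
  refine Finset.sum_eq_zero fun p _ => Finset.sum_eq_zero fun τ _ => ?_
  rw [cupProd_gridSphereCochain_freudenthalVertex hh, if_neg, smul_zero]
  refine fun ⟨hτ, _⟩ => hc (Function.Surjective.bijective_of_finite fun d => ?_)
  obtain ⟨y, hy⟩ := τ.surjective (finProdFinEquiv (d, ⟨0, hm⟩))
  obtain ⟨⟨i, r⟩, rfl⟩ := finProdFinEquiv.surjective y
  exact ⟨i, (Prod.ext_iff.1 (finProdFinEquiv.injective ((hτ i r).symm.trans hy))).1⟩

theorem torusEval_cupProd_sum_gridSphereCochain (hm : 1 ≤ m) (hme : Even m) (hh : 1 ≤ h)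
    (A : Matrix (Fin n) (Fin n) ℤ) :
    torusEval (cupProd m fun i => ∑ c, A i c • gridSphereCochain m n h c) = A.permanent := by
  have expand : torusEval (cupProd m fun i => ∑ c, A i c • gridSphereCochain m n h c) =
      ∑ c : Fin n → Fin n, (∏ i, A i (c i)) *
        torusEval (cupProd m fun i => gridSphereCochain m n h (c i)) := by
    simp only [torusEval, cupProd, Finset.sum_apply, Pi.smul_apply, smul_eq_mul,
      Finset.prod_univ_sum, Fintype.piFinset_univ, Finset.prod_mul_distrib, Finset.smul_sum,
      Finset.mul_sum, mul_smul_comm]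
    simp only [Finset.sum_comm (t := (Finset.univ : Finset (Fin n → Fin n)))]
  rw [expand, ← Matrix.permanent_transpose]
  symm
  refine Fintype.sum_of_injective DFunLike.coe DFunLike.coe_injective _ _ (fun c hc => ?_)
    fun π => ?_
  · rw [torusEval_cupProd_gridSphereCochain_of_not_bijective hm hh fun hbij =>
      hc ⟨.ofBijective c hbij, rfl⟩, mul_zero]
  · rw [torusEval_cupProd_gridSphereCochain_perm hme hh, mul_one]
    rfl

theorem permanent_single_sub_single_neg {ι : Type*} [Fintype ι] [DecidableEq ι] {c₀ c₁ : ι}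
    (h : c₁ ≠ c₀) :
    (Matrix.of fun i => Pi.single (Function.update id c₀ c₁ i) 1 - Pi.single c₀ 1 :
      Matrix ι ι ℤ).permanent < 0 := by
  have update_ne (i : ι) : c₀ ≠ Function.update id c₀ c₁ i := by
    obtain rfl | hi := eq_or_ne i c₀ <;> simp [*, Ne.symm]
  -- Every term of the permanent has exactly one negative factor, the one in the column `c₀`.
  have term_eq (π : Perm ι) :
      ∏ i, (Pi.single (Function.update id c₀ c₁ (π i)) 1 - Pi.single c₀ 1 : ι → ℤ) i =
        -∏ i ∈ Finset.univ.erase c₀, (Pi.single (Function.update id c₀ c₁ (π i)) 1 : ι → ℤ) i := by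
    rw [← Finset.mul_prod_erase _ _ (Finset.mem_univ c₀), Pi.sub_apply,
      Pi.single_eq_of_ne (update_ne _), Pi.single_eq_same, zero_sub, neg_one_mul, neg_inj]
    refine Finset.prod_congr rfl fun i hi => ?_
    simp [Finset.ne_of_mem_erase hi]
  simp only [Matrix.permanent, Matrix.of_apply, term_eq]
  refine Finset.sum_neg' (fun π _ => neg_nonpos.2 (Finset.prod_nonneg fun i _ => ?_))
    ⟨1, Finset.mem_univ _, ?_⟩
  · rw [Pi.single_apply]
    split_ifs <;> simp
  · rw [Finset.prod_eq_one fun i hi => by simp [Finset.ne_of_mem_erase hi]]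
    simp

theorem HasPlanners.mono {X : Type*} [TopologicalSpace X] {k k' : ℕ} (hk : k ≤ k')
    (h : HasPlanners X n k) : HasPlanners X n k' := by
  obtain ⟨U, hU, hcov, hs⟩ := h
  let V (i : Fin k') : Set (Fin n → X) := if hi : (i : ℕ) < k then U ⟨i, hi⟩ else ∅
  have V_castLE (i : Fin k) : V (i.castLE hk) = U i := dif_pos i.isLt
  have V_cases (i : Fin k') : (∃ j, V i = U j) ∨ V i = ∅ :=
    (lt_or_ge (i : ℕ) k).imp (fun hi => ⟨⟨i, hi⟩, dif_pos hi⟩) fun hi => dif_neg hi.not_gt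
  refine ⟨V, fun i => ?_, ?_, fun i => ?_⟩
  · obtain ⟨j, hj⟩ | hi := V_cases i
    exacts [hj ▸ hU j, hi ▸ isOpen_empty]
  · exact Set.eq_univ_of_univ_subset (hcov.ge.trans (Set.iUnion_subset fun i =>
      Set.subset_iUnion_of_subset (i.castLE hk) (V_castLE i).ge))
  · obtain ⟨j, hj⟩ | hi := V_cases i
    · exact hj ▸ hs j
    · rw [hi]
      exact ⟨⟨isEmptyElim, continuous_of_discreteTopology⟩, isEmptyElim⟩

theorem succ_le_of_hasPlanners_sphere {k : ℕ} (hm : 1 ≤ m) (hme : Even m) (hn : 2 ≤ n)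
    (hk : HasPlanners (Sph m) n k) : n + 1 ≤ k := by
  by_contra! hkn
  let c₀ : Fin n := ⟨0, by omega⟩
  let c₁ : Fin n := ⟨1, hn⟩
  have radius_pos : (0 : ℝ) < 1 / (m + 1) := by positivity
  obtain ⟨ε, exact, hε⟩ := ((cupProd_zeroDivisor_cohomologousOn_zero
    (hk.mono (Nat.le_of_lt_succ hkn)) radius_pos (isCocycleOn_sphereCochain m)
    (Function.update id c₀ c₁) fun _ => c₀).and self_mem_nhdsWithin).exists
  obtain ⟨h, hh, hdist⟩ := exists_dist_gridCollapse_lt m hε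
  let f (p : Fin (n * m) → ZMod (2 * h + 2)) (c : Fin n) : Sph m :=
    gridCollapse fun j => p (finProdFinEquiv (c, j))
  have pullback_zeroDivisor (c c' : Fin n) :
      pullback f (zeroDivisor (sphereCochain m) c c') = ∑ d,
        (Pi.single c 1 - Pi.single c' 1 : Fin n → ℤ) d • gridSphereCochain m n h d := by
    simp only [Pi.sub_apply, sub_smul, Finset.sum_sub_distrib, Pi.single_apply, ite_smul, one_smul,
      zero_smul, Finset.sum_ite_eq', Finset.mem_univ, if_true]
    ext l
    simp [zeroDivisor, gridSphereCochain, f, Function.comp_def]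
  have eval_zero : torusEval (pullback f (cupProd m fun i =>
      zeroDivisor (sphereCochain m) (Function.update id c₀ c₁ i) c₀)) = 0 := by
    refine torusEval_eq_zero_of_cohomologousOn
      (G := {l | l.map f ∈ smallTuples _ ε}) (fun p τ => ?_) (exact.pullback fun l hl => hl)
    have near (k : ℕ) (x : Fin (n * m)) : freudenthalVertex p τ k x = p x ∨
        freudenthalVertex p τ k x = p x + 1 := by
      simp only [freudenthalVertex]
      split_ifs <;> simp
    simp only [Set.mem_ofPred_eq, map_ofFn, smallTuples, forall_mem_ofFn_iff, Function.comp_apply]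
    exact fun k k' => (dist_pi_lt_iff hε).2 fun c =>
      hdist _ _ _ (fun j => near k _) fun j => near k' _
  rw [pullback_cupProd] at eval_zero
  simp only [pullback_zeroDivisor] at eval_zero
  refine (permanent_single_sub_single_neg (c₀ := c₀) (c₁ := c₁) (by simp [c₀, c₁])).ne ?_
  rw [← torusEval_cupProd_sum_gridSphereCochain hm hme hh]
  exact eval_zero

end LowerBound

/-! ### Strata and motion planners on open pieces -/

section Strata

variable {E L : Type*} [PseudoEMetricSpace E] {lab : E → L} {rank : L → ℕ} {l l' : L} {y : E}

/-- Given a stratification of `E` by the fibres of `lab`, the points strictly closer to the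
stratum labelled `l` than to every other stratum of the same rank. -/
def stratumNhd (lab : E → L) (rank : L → ℕ) (l : L) : Set E :=
  {y | ∀ l' ≠ l, rank l' = rank l →
    Metric.infEDist y (lab ⁻¹' {l}) < Metric.infEDist y (lab ⁻¹' {l'})}

theorem isOpen_stratumNhd [Finite L] (lab : E → L) (rank : L → ℕ) (l : L) :
    IsOpen (stratumNhd lab rank l) := by
  simp only [stratumNhd, Set.ofPred_forall]
  exact isOpen_iInter_of_finite fun _ => isOpen_iInter_of_finite fun _ =>
    isOpen_iInter_of_finite fun _ => isOpen_lt Metric.continuous_infEDist Metric.continuous_infEDist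

theorem mem_stratumNhd
    (hlab : ∀ l, y ∈ closure (lab ⁻¹' {l}) → lab y = l ∨ rank l < rank (lab y)) :
    y ∈ stratumNhd lab rank (lab y) := by
  intro l' hne hrank
  rw [Metric.infEDist_zero_of_mem (show y ∈ lab ⁻¹' {lab y} from rfl), pos_iff_ne_zero]
  intro h
  rcases hlab l' (Metric.mem_closure_iff_infEDist_zero.2 h) with h | h
  exacts [hne h.symm, h.ne hrank]

theorem eq_of_mem_stratumNhd (h : y ∈ stratumNhd lab rank l) (h' : y ∈ stratumNhd lab rank l')
    (hrank : rank l = rank l') : l = l' := by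
  by_contra hne
  exact lt_asymm (h l' (Ne.symm hne) hrank.symm) (h' l hne hrank)

variable {f : E → E} {r : L → L}

theorem infEDist_fiber_of_isometry (hf : Isometry f) (hff : f.Involutive) (hr : r.Involutive)
    (hlab : ∀ y, lab (f y) = r (lab y)) (l : L) (y : E) :
    Metric.infEDist (f y) (lab ⁻¹' {r l}) = Metric.infEDist y (lab ⁻¹' {l}) := by
  have himage : lab ⁻¹' {r l} = f '' (lab ⁻¹' {l}) := by
    ext z
    simp [hff.image_eq_preimage_symm, hlab, hr.eq_iff]
  rw [himage, Metric.infEDist_image hf]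

theorem mem_stratumNhd_of_isometry (hf : Isometry f) (hff : f.Involutive) (hr : r.Involutive)
    (hlab : ∀ y, lab (f y) = r (lab y)) (hrank : ∀ l, rank (r l) = rank l)
    (h : y ∈ stratumNhd lab rank l) : f y ∈ stratumNhd lab rank (r l) := by
  intro l' hne hl'
  have := h (r l') (fun h => hne (by rw [← h, hr])) (by rw [hrank, hl', hrank])
  rwa [← infEDist_fiber_of_isometry hf hff hr hlab,
    ← infEDist_fiber_of_isometry hf hff hr hlab (r l'), hr] at this

end Strata

theorem rtuple_involutive {X : Type*} {n : ℕ} :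
    Function.Involutive (rtuple : (Fin n → X) → Fin n → X) :=
  fun x => funext fun j => congrArg x j.rev_rev

theorem isometry_rtuple {X : Type*} [PseudoEMetricSpace X] {n : ℕ} :
    Isometry (rtuple : (Fin n → X) → Fin n → X) := by
  intro x y
  simp only [edist_pi_def, rtuple, Finset.sup_univ_eq_iSup]
  exact Fin.revPerm.iSup_comp (g := fun j => edist (x j) (y j))

section OpenPieces

variable {X : Type*} [TopologicalSpace X] {n k : ℕ}

theorem HasBidirPlanners.hasPlanners (h : HasBidirPlanners X n k) : HasPlanners X n k := by
  obtain ⟨U, hopen, hcover, -, hsection⟩ := h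
  exact ⟨U, hopen, hcover, fun i => (hsection i).imp fun _ hs => hs.1⟩

theorem HasBidirPlanners.of_openPieces {L : Type*} {W : L → Set (Fin n → X)} {rank : L → Fin k}
    {r : L → L} (hopen : ∀ l, IsOpen (W l)) (hcover : ∀ x, ∃ l, x ∈ W l)
    (hunique : ∀ {l l' x}, x ∈ W l → x ∈ W l' → rank l = rank l' → l = l')
    (hrev : ∀ {l x}, x ∈ W l → rtuple x ∈ W (r l)) (hrank : ∀ l, rank (r l) = rank l)
    (s : ∀ l, C(W l, C(unitInterval, X)))
    (heval : ∀ l (x : W l) j, s l x (evalPt n j) = (x : Fin n → X) j)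
    (hequiv : ∀ l (x : W l), s (r l) ⟨rtuple x, hrev x.2⟩ = rpath (s l x)) :
    HasBidirPlanners X n k := by
  let U (i : Fin k) : Set (Fin n → X) := ⋃ l : {l // rank l = i}, W l
  have mem_U {i l x} (hl : rank l = i) (hx : x ∈ W l) : x ∈ U i := Set.mem_iUnion.2 ⟨⟨l, hl⟩, hx⟩
  refine ⟨U, fun i => isOpen_iUnion fun l => hopen l, ?_, fun i x hx => ?_, fun i => ?_⟩
  · refine Set.eq_univ_iff_forall.2 fun x => ?_
    obtain ⟨l, hx⟩ := hcover x
    exact Set.mem_iUnion.2 ⟨rank l, mem_U rfl hx⟩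
  · obtain ⟨⟨l, hl⟩, hx⟩ := Set.mem_iUnion.1 hx
    exact mem_U ((hrank l).trans hl) (hrev hx)
  · let V (l : {l // rank l = i}) : Set (U i) := Subtype.val ⁻¹' W l
    let glued : C(U i, C(unitInterval, X)) := ContinuousMap.liftCover V
      (fun l => (s l).comp ⟨fun x => ⟨x, x.2⟩, by fun_prop⟩)
      (by
        intro l l' x hx hx'
        obtain rfl : l = l' := Subtype.ext (hunique hx hx' (l.2.trans l'.2.symm))
        rfl)
      (fun x => by
        obtain ⟨l, hx⟩ := Set.mem_iUnion.1 x.2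
        exact ⟨l, ((hopen l).preimage continuous_subtype_val).mem_nhds hx⟩)
    have glued_eq {l x} (hl : rank l = i) (hx : x ∈ W l) :
        glued ⟨x, mem_U hl hx⟩ = s l ⟨x, hx⟩ :=
      ContinuousMap.liftCover_coe (S := V) (i := ⟨l, hl⟩) ⟨⟨x, mem_U hl hx⟩, hx⟩
    refine ⟨glued, fun ⟨x, hx⟩ j => ?_, fun ⟨x, hx⟩ _ => ?_⟩ <;>
      obtain ⟨⟨l, hl⟩, hx⟩ := Set.mem_iUnion.1 hx
    · rw [glued_eq hl hx, heval]
    · rw [glued_eq hl hx, glued_eq ((hrank l).trans hl) (hrev hx), hequiv l ⟨x, hx⟩]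

end OpenPieces

/-! ### Labels of tuples of points of a sphere -/

theorem ncard_lt_ncard_castSucc_union_succ {k : ℕ} {B : Set (Fin k)} (hB : B.Nonempty) :
    B.ncard < (Fin.castSucc '' B ∪ Fin.succ '' B).ncard := by
  obtain ⟨j, hj, hmin⟩ := Set.exists_min_image B id B.toFinite hB
  have hnotMem : j.castSucc ∉ Fin.succ '' B := by
    rintro ⟨i, hi, h⟩
    exact (hmin i hi).not_gt (Fin.castSucc_lt_castSucc_iff.1 (h ▸ Fin.castSucc_lt_succ))
  calc
    B.ncard < (insert j.castSucc (Fin.succ '' B)).ncard := by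
      rw [Set.ncard_insert_of_notMem hnotMem, Set.ncard_image_of_injective _ (Fin.succ_injective k)]
      exact Nat.lt_succ_self _
    _ ≤ _ := Set.ncard_le_ncard
      (Set.insert_subset (.inl (Set.mem_image_of_mem _ hj)) Set.subset_union_right)

/-- A label records which entries of a `(k + 1)`-tuple are poles and which of its `k` pairs of
consecutive entries are antipodal. -/
abbrev PoleLabel (k : ℕ) : Type := Set (Fin (k + 1)) × Set (Fin k)

namespace PoleLabel

variable {k : ℕ} {l l' : PoleLabel k}

/-- The antipodal pairs, none of whose entries is a pole. -/
def free (l : PoleLabel k) : Set (Fin k) := {j ∈ l.2 | j.castSucc ∉ l.1 ∧ j.succ ∉ l.1}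

/-- The number of independent coincidences, i.e. the codimension of the stratum in units of the
dimension of the sphere. -/
def rank (l : PoleLabel k) : ℕ := l.1.ncard + l.free.ncard

/-- The label of the reversed tuple. -/
def rev (l : PoleLabel k) : PoleLabel k := (Fin.rev ⁻¹' l.1, Fin.rev ⁻¹' l.2)

theorem rev_involutive : Function.Involutive (rev : PoleLabel k → PoleLabel k) := fun l => by
  simp [rev, ← Set.preimage_comp, Fin.rev_involutive.comp_self]

theorem free_rev (l : PoleLabel k) : l.rev.free = Fin.rev ⁻¹' l.free := by
  ext j
  refine and_congr_right fun _ => ?_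
  change j.castSucc.rev ∉ l.1 ∧ j.succ.rev ∉ l.1 ↔ j.rev.castSucc ∉ l.1 ∧ j.rev.succ ∉ l.1
  rw [Fin.rev_castSucc, Fin.rev_succ, and_comm]

theorem rank_rev (l : PoleLabel k) : l.rev.rank = l.rank := by
  have ncard_rev {n : ℕ} (s : Set (Fin n)) : (Fin.rev ⁻¹' s).ncard = s.ncard :=
    Set.ncard_preimage_of_injective_subset_range Fin.rev_injective
      (by simp [Fin.rev_surjective.range_eq])
  rw [rank, free_rev, ncard_rev]
  exact congrArg (· + _) (ncard_rev l.1)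

theorem rank_le (l : PoleLabel k) : l.rank ≤ k + 1 := by
  have hdisjoint : Disjoint l.1 (Fin.succ '' l.free) := by
    rw [Set.disjoint_right]
    rintro _ ⟨j, hj, rfl⟩
    exact hj.2.2
  rw [rank, ← Set.ncard_image_of_injective l.free (Fin.succ_injective k),
    ← Set.ncard_union_eq hdisjoint]
  exact (Set.ncard_le_card _).trans_eq (Nat.card_fin _)

theorem eq_or_rank_lt_rank (hpoles : l.1 ⊆ l'.1)
    (hfree : ∀ j ∈ l.free, j ∉ l'.free → j.castSucc ∈ l'.1 ∧ j.succ ∈ l'.1) :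
    (l.1 = l'.1 ∧ l.free = l'.free) ∨ l.rank < l'.rank := by
  rcases (l.free \ l'.free).eq_empty_or_nonempty with hempty | hnonempty
  · have hsub : l.free ⊆ l'.free := Set.sdiff_eq_empty.1 hempty
    have h₁ := Set.ncard_le_ncard hpoles
    have h₂ := Set.ncard_le_ncard hsub
    refine (lt_or_ge l.rank l'.rank).symm.imp_left fun h => ?_
    unfold rank at h
    exact ⟨Set.eq_of_subset_of_ncard_le hpoles (by lia),
      Set.eq_of_subset_of_ncard_le hsub (by lia)⟩
  · have hnew :
        Fin.castSucc '' (l.free \ l'.free) ∪ Fin.succ '' (l.free \ l'.free) ⊆ l'.1 \ l.1 := by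
      rintro _ (⟨j, ⟨hj, hj'⟩, rfl⟩ | ⟨j, ⟨hj, hj'⟩, rfl⟩)
      exacts [⟨(hfree j hj hj').1, hj.2.1⟩, ⟨(hfree j hj hj').2, hj.2.2⟩]
    right
    calc
      l.rank = l.1.ncard + (l.free \ l'.free).ncard + (l.free ∩ l'.free).ncard := by
        rw [rank, add_assoc, add_comm (l.free \ _).ncard, Set.ncard_inter_add_ncard_sdiff_eq_ncard]
      _ < l.1.ncard + (l'.1 \ l.1).ncard + (l.free ∩ l'.free).ncard := by
        gcongr
        exact (ncard_lt_ncard_castSucc_union_succ hnonempty).trans_le (Set.ncard_le_ncard hnew)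
      _ ≤ l'.rank := by
        rw [add_comm l.1.ncard, Set.ncard_sdiff_add_ncard_of_subset hpoles, rank]
        exact Nat.add_le_add_left (Set.ncard_le_ncard Set.inter_subset_right) _

end PoleLabel

section SphereLabel

variable {V : Type*} [NormedAddCommGroup V] {k : ℕ} {N : Metric.sphere (0 : V) 1}
  {y : Fin (k + 1) → Metric.sphere (0 : V) 1} {j : Fin k}

/-- The label of a tuple of points of a sphere whose poles are `N` and `-N`. -/
def poleLabel (N : Metric.sphere (0 : V) 1) (y : Fin (k + 1) → Metric.sphere (0 : V) 1) :
    PoleLabel k :=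
  ({j | y j = N ∨ y j = -N}, {j | y j.succ = -y j.castSucc})

theorem poleLabel_rtuple (N : Metric.sphere (0 : V) 1)
    (y : Fin (k + 1) → Metric.sphere (0 : V) 1) :
    poleLabel N (rtuple y) = (poleLabel N y).rev := by
  ext j
  · rfl
  · change y j.succ.rev = -y j.castSucc.rev ↔ y j.rev.succ = -y j.rev.castSucc
    rw [Fin.rev_castSucc, Fin.rev_succ, eq_comm, neg_eq_iff_eq_neg]

theorem succ_mem_poles_iff (h : j ∈ (poleLabel N y).2) :
    j.succ ∈ (poleLabel N y).1 ↔ j.castSucc ∈ (poleLabel N y).1 := by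
  change y j.succ = N ∨ y j.succ = -N ↔ y j.castSucc = N ∨ y j.castSucc = -N
  rw [show y j.succ = -y j.castSucc from h, neg_inj, neg_eq_iff_eq_neg, or_comm]

theorem mem_free_poleLabel_iff :
    j ∈ (poleLabel N y).free ↔ j ∈ (poleLabel N y).2 ∧ j.castSucc ∉ (poleLabel N y).1 := by
  refine and_congr_right fun h => ?_
  rw [succ_mem_poles_iff h, and_self]

variable [NormedSpace ℝ V]

theorem poleLabel_eq_of_polarPairs {l : PoleLabel k} (hpoles : l.1 = (poleLabel N y).1)
    (hfree : l.free = (poleLabel N y).free) (hanti : l.2 ⊆ (poleLabel N y).2)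
    (hpolar : ∀ j ∉ l.2, j.castSucc ∈ l.1 → j.succ ∈ l.1 → y j.succ = y j.castSucc) :
    poleLabel N y = l := by
  refine Prod.ext hpoles.symm (hanti.antisymm fun j hj => ?_).symm
  by_contra hjl
  have hcast : j.castSucc ∈ (poleLabel N y).1 := by
    by_contra hcast
    exact hjl (hfree.ge (mem_free_poleLabel_iff.2 ⟨hj, hcast⟩)).1
  have heq := hpolar j hjl (hpoles ▸ hcast) (hpoles ▸ (succ_mem_poles_iff hj).2 hcast)
  exact ne_neg_of_mem_unit_sphere ℝ (y j.castSucc) (heq.symm.trans hj)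

theorem poleLabel_eq_or_rank_lt_of_mem_closure (l : PoleLabel k)
    (hy : y ∈ closure (poleLabel N ⁻¹' {l})) :
    poleLabel N y = l ∨ l.rank < (poleLabel N y).rank := by
  have mem_of_isClosed {C : Set (Fin (k + 1) → Metric.sphere (0 : V) 1)} (hC : IsClosed C)
      (hlC : ∀ z, poleLabel N z = l → z ∈ C) : y ∈ C :=
    closure_minimal hlC hC hy
  have hpoles : l.1 ⊆ (poleLabel N y).1 := fun j hj => by
    refine mem_of_isClosed (C := {z | z j = N ∨ z j = -N})
      ((isClosed_eq (by fun_prop) (by fun_prop)).union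
        (isClosed_eq (by fun_prop) (by fun_prop))) ?_
    rintro z rfl
    exact hj
  have hanti : l.2 ⊆ (poleLabel N y).2 := fun j hj => by
    refine mem_of_isClosed (C := {z | z j.succ = -z j.castSucc})
      (isClosed_eq (by fun_prop) (by fun_prop)) ?_
    rintro z rfl
    exact hj
  have hpolar (j) (hj : j ∉ l.2) (hcast : j.castSucc ∈ l.1) (hsucc : j.succ ∈ l.1) :
      y j.succ = y j.castSucc := by
    refine mem_of_isClosed (C := {z | z j.succ = z j.castSucc})
      (isClosed_eq (by fun_prop) (by fun_prop)) ?_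
    rintro z rfl
    change z j.succ ≠ -z j.castSucc at hj
    rcases hcast with hcast | hcast <;> rcases hsucc with hsucc | hsucc <;> simp_all
  have hfree (j) (hj : j ∈ l.free) (hj' : j ∉ (poleLabel N y).free) :
      j.castSucc ∈ (poleLabel N y).1 ∧ j.succ ∈ (poleLabel N y).1 := by
    have hjanti := hanti hj.1
    rw [succ_mem_poles_iff hjanti, and_self]
    by_contra hcast
    exact hj' (mem_free_poleLabel_iff.2 ⟨hjanti, hcast⟩)
  exact (PoleLabel.eq_or_rank_lt_rank hpoles hfree).imp_left fun ⟨hpoles, hfree⟩ =>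
    poleLabel_eq_of_polarPairs hpoles hfree hanti hpolar

end SphereLabel

/-! ### Planar arcs and their concatenation -/

section Arc

open scoped RealInnerProductSpace

variable {V : Type*} [NormedAddCommGroup V] [InnerProductSpace ℝ V] {k : ℕ}

/-- The component of `u` orthogonal to `x - y`, scaled by `‖x - y‖ ^ 2` so as to be polynomial and
to vanish at `x = y`. -/
def deflection (u x y : V) : V := ‖x - y‖ ^ 2 • u - ⟪u, x - y⟫ • (x - y)

/-- The parabolic arc from `x` to `y` bent in the direction `u`. -/
def arc (u x y : V) (t : ℝ) : V := (1 - t) • x + t • y + (t * (1 - t)) • deflection u x y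

theorem deflection_comm (u x y : V) : deflection u x y = deflection u y x := by
  rw [deflection, deflection, norm_sub_rev x y, ← neg_sub y x, inner_neg_right, smul_neg, neg_smul,
    neg_neg]

theorem inner_deflection_sub (u x y : V) : ⟪deflection u x y, x - y⟫ = 0 := by
  rw [deflection, inner_sub_left, real_inner_smul_left, real_inner_smul_left,
    real_inner_self_eq_norm_sq]
  ring

theorem arc_one_sub (u x y : V) (t : ℝ) : arc u y x (1 - t) = arc u x y t := by
  rw [arc, arc, deflection_comm, sub_sub_cancel]
  module

theorem arc_zero_left_half (x y : V) : arc 0 x y (1 / 2) = (1 / 2 : ℝ) • (x + y) := by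
  simp only [arc, deflection, smul_zero, inner_zero_left, zero_smul, sub_zero, add_zero]
  module

theorem arc_neg_half (u : V) {x : V} (hx : ‖x‖ = 1) :
    arc u x (-x) (1 / 2) = u - ⟪u, x⟫ • x := by
  have hnorm : ‖x - -x‖ = 2 := by rw [sub_neg_eq_add, ← two_smul ℝ, norm_smul, hx]; simp
  rw [arc, deflection, hnorm, sub_neg_eq_add, inner_add_right]
  module

/-- The arc lies on a parabola whose axis is orthogonal to `x - y`: it can only meet the origin
halfway, where it crosses the perpendicular bisector of `x` and `y`. -/
theorem arc_ne_zero {u x y : V} (hx : ‖x‖ = 1) (hy : ‖y‖ = 1) (h : arc u x y (1 / 2) ≠ 0) (t : ℝ) :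
    arc u x y t ≠ 0 := by
  intro h0
  have hinner : (1 - 2 * t) * (1 - ⟪x, y⟫) = 0 := by
    have := congrArg (⟪·, x - y⟫) h0
    simp only [arc, inner_add_left, real_inner_smul_left, inner_deflection_sub,
      inner_zero_left] at this
    simp only [inner_sub_right, real_inner_self_eq_norm_sq, hx, hy, real_inner_comm x y] at this
    linarith
  rcases mul_eq_zero.1 hinner with ht | hxy
  · exact h (by rwa [show (1 / 2 : ℝ) = t by linarith])
  · obtain rfl : x = y :=
      (inner_eq_one_iff_of_norm_eq_one (𝕜 := ℝ) hx hy).1 (sub_eq_zero.1 hxy).symm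
    have harc : arc u x x t = x := by
      rw [arc, deflection, sub_self, norm_zero, inner_zero_right]
      module
    rw [harc] at h0
    simp [h0] at hx

/-- The tent function supported on `[-1, 1]`. -/
def tent (x : ℝ) : ℝ := max 0 (1 - |x|)

/-- The parabolic bump supported on `[0, 1]`. -/
def bump (x : ℝ) : ℝ := max 0 (x * (1 - x))

theorem tent_neg (x : ℝ) : tent (-x) = tent x := by rw [tent, tent, abs_neg]

theorem bump_one_sub (x : ℝ) : bump (1 - x) = bump x := by
  rw [bump, bump, sub_sub_cancel, mul_comm]

theorem tent_eq_zero {x : ℝ} (h : 1 ≤ |x|) : tent x = 0 := max_eq_left (by linarith)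

theorem bump_eq_zero {x : ℝ} (h : x ≤ 0 ∨ 1 ≤ x) : bump x = 0 :=
  max_eq_left (by rcases h with h | h <;> nlinarith)

theorem tent_natCast_sub_natCast {i j : ℕ} (h : i ≠ j) : tent ((i : ℝ) - j) = 0 := by
  refine tent_eq_zero ?_
  exact_mod_cast Int.one_le_abs (sub_ne_zero.2 (Nat.cast_injective.ne h))

/-- The concatenation of the arcs from `y j` to `y (j + 1)` bent in the direction `u j`, the `j`-th
one being parametrised by `[j, j + 1]`. -/
def arcChain (u : Fin k → V) (y : Fin (k + 1) → V) (x : ℝ) : V :=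
  ∑ j : Fin (k + 1), tent (x - j) • y j +
    ∑ j : Fin k, bump (x - j) • deflection (u j) (y j.castSucc) (y j.succ)

theorem arcChain_comp_rev (u : Fin k → V) (y : Fin (k + 1) → V) (x : ℝ) :
    arcChain (u ∘ Fin.rev) (y ∘ Fin.rev) x = arcChain u y (k - x) := by
  unfold arcChain
  congr 1
  · refine Fintype.sum_equiv Fin.revPerm _ _ fun j => ?_
    rw [Fin.revPerm_apply, Function.comp_apply, ← tent_neg, Fin.val_rev, Nat.cast_sub (by lia)]
    congr 2
    push_cast
    ring
  · refine Fintype.sum_equiv Fin.revPerm _ _ fun j => ?_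
    rw [Fin.revPerm_apply, Function.comp_apply, Function.comp_apply, Function.comp_apply,
      Fin.rev_castSucc, Fin.rev_succ, deflection_comm, ← bump_one_sub, Fin.val_rev,
      Nat.cast_sub (by lia)]
    congr 2
    push_cast
    ring

theorem arcChain_add (u : Fin k → V) (y : Fin (k + 1) → V) (j : Fin k) {t : ℝ} (ht : t ∈ I) :
    arcChain u y (j + t) = arc (u j) (y j.castSucc) (y j.succ) t := by
  obtain ⟨ht0, ht1⟩ := ht
  unfold arcChain arc
  congr 1
  · rw [Fintype.sum_eq_add j.castSucc j.succ Fin.castSucc_lt_succ.ne]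
    · congr 2
      · simp [tent, abs_of_nonneg ht0, ht1]
      · rw [Fin.val_succ, ← tent_neg, Nat.cast_succ, show -((j : ℝ) + t - (j + 1)) = 1 - t by ring,
          tent, abs_of_nonneg (by linarith), sub_sub_cancel, max_eq_right ht0]
    · rintro i ⟨hcast, hsucc⟩
      rw [tent_eq_zero, zero_smul]
      have hcast : (i : ℕ) ≠ j := fun h => hcast (Fin.ext h)
      have hsucc : (i : ℕ) ≠ j + 1 := fun h => hsucc (Fin.ext h)
      rcases lt_or_gt_of_ne hcast with h | h
      · have : (i : ℝ) + 1 ≤ j := by exact_mod_cast h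
        exact le_abs.2 (.inl (by linarith))
      · have : (j : ℝ) + 1 + 1 ≤ i := by exact_mod_cast Nat.lt_of_le_of_ne h hsucc.symm
        exact le_abs.2 (.inr (by linarith))
  · rw [Fintype.sum_eq_single j, add_sub_cancel_left, bump,
      max_eq_right (mul_nonneg ht0 (by linarith))]
    intro i hi
    rw [bump_eq_zero, zero_smul]
    rcases lt_or_gt_of_ne hi with h | h
    · right
      have : (i : ℝ) + 1 ≤ j := by exact_mod_cast h
      linarith
    · left
      have : (j : ℝ) + 1 ≤ i := by exact_mod_cast h
      linarith

theorem arcChain_natCast (u : Fin k → V) (y : Fin (k + 1) → V) (j : Fin (k + 1)) :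
    arcChain u y j = y j := by
  rw [arcChain, Fintype.sum_eq_single j, Fintype.sum_eq_zero, add_zero, sub_self]
  · simp [tent]
  · intro i
    rw [bump_eq_zero, zero_smul]
    rcases Nat.lt_or_ge i j with h | h
    · right
      have : (i : ℝ) + 1 ≤ (j : ℕ) := by exact_mod_cast h
      linarith
    · left
      exact sub_nonpos.2 (by exact_mod_cast h)
  · intro i hi
    rw [tent_natCast_sub_natCast (Fin.val_ne_of_ne hi.symm), zero_smul]

theorem arcChain_ne_zero (hk : 1 ≤ k) {u : Fin k → V} {y : Fin (k + 1) → V} (hy : ∀ j, ‖y j‖ = 1)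
    (h : ∀ j : Fin k, arc (u j) (y j.castSucc) (y j.succ) (1 / 2) ≠ 0) {x : ℝ}
    (hx : x ∈ Set.Icc (0 : ℝ) k) : arcChain u y x ≠ 0 := by
  obtain ⟨j, t, ht, rfl⟩ : ∃ (j : Fin k) (t : ℝ), t ∈ I ∧ j + t = x := by
    rcases lt_or_eq_of_le hx.2 with hlt | rfl
    · exact ⟨⟨⌊x⌋₊, (Nat.floor_lt hx.1).2 hlt⟩, x - ⌊x⌋₊,
        ⟨by linarith [Nat.floor_le hx.1], by linarith [Nat.lt_floor_add_one x]⟩, by simp⟩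
    · exact ⟨⟨k - 1, by lia⟩, 1, unitInterval.one_mem, by simp [Nat.cast_sub hk]⟩
  rw [arcChain_add u y j ht]
  exact arc_ne_zero (hy _) (hy _) (h j) t

theorem continuous_arcChain (u : Fin k → V) :
    Continuous fun q : (Fin (k + 1) → V) × ℝ => arcChain u q.1 q.2 := by
  unfold arcChain tent bump deflection
  fun_prop

end Arc

/-! ### The upper bound -/

section UpperBound

open scoped RealInnerProductSpace

variable {V : Type*} [NormedAddCommGroup V] {k : ℕ}

open Classical in
/-- The directions in which the arcs of a tuple with the given label are bent: towards the pole
`N` between antipodal points that are not poles, and towards `e` between the two poles. -/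
def arcDirection (N e : V) (l : PoleLabel k) (j : Fin k) : V :=
  if j ∈ l.free then N else if j ∈ l.2 then e else 0

theorem arcDirection_rev (N e : V) (l : PoleLabel k) :
    arcDirection N e l.rev = arcDirection N e l ∘ Fin.rev := by
  classical
  funext j
  have hfree : j ∈ l.rev.free ↔ j.rev ∈ l.free := by rw [PoleLabel.free_rev, Set.mem_preimage]
  exact if_congr hfree rfl (if_congr Iff.rfl rfl rfl)

variable [InnerProductSpace ℝ V]

/-- The tuples whose chain of arcs, bent as prescribed by the label `l`, avoids the origin. -/
def arcDomain (N e : V) (l : PoleLabel k) : Set (Fin (k + 1) → Metric.sphere (0 : V) 1) :=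
  {y | ∀ j : Fin k, arc (arcDirection N e l j) (y j.castSucc : V) (y j.succ) (1 / 2) ≠ 0}

theorem isOpen_arcDomain (N e : V) (l : PoleLabel k) : IsOpen (arcDomain N e l) := by
  simp only [arcDomain, Set.ofPred_forall]
  refine isOpen_iInter_of_finite fun j => isOpen_ne_fun ?_ continuous_const
  unfold arc deflection
  fun_prop

theorem rtuple_mem_arcDomain {N e : V} {l : PoleLabel k}
    {y : Fin (k + 1) → Metric.sphere (0 : V) 1} (h : y ∈ arcDomain N e l) :
    rtuple y ∈ arcDomain N e l.rev := by
  intro j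
  have := h j.rev
  rwa [← arc_one_sub, ← Fin.rev_succ, ← Fin.rev_castSucc, sub_half,
    ← Function.comp_apply (f := arcDirection _ _ _), ← arcDirection_rev] at this

theorem eq_or_eq_neg_of_smul_eq {N x : Metric.sphere (0 : V) 1} {c : ℝ} (h : c • (x : V) = N) :
    x = N ∨ x = -N := by
  have habs : |c| = 1 := by
    simpa [norm_smul] using congrArg norm h
  rcases eq_or_eq_neg_of_abs_eq habs with rfl | rfl
  · exact .inl (Subtype.ext (by rw [← h, one_smul]))
  · exact .inr (Subtype.ext (by simp [← h]))

theorem mem_arcDomain_poleLabel {N : Metric.sphere (0 : V) 1} {e : V} (he : e ≠ 0)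
    (heN : ⟪e, N⟫ = 0) (y : Fin (k + 1) → Metric.sphere (0 : V) 1) :
    y ∈ arcDomain (N : V) e (poleLabel N y) := by
  intro j
  unfold arcDirection
  by_cases hanti : j ∈ (poleLabel N y).2
  · have hsucc : (y j.succ : V) = -y j.castSucc := congrArg Subtype.val hanti
    rw [hsucc, arc_neg_half _ (norm_eq_of_mem_sphere _)]
    split_ifs with hfree
    · exact fun h => hfree.2.1 (eq_or_eq_neg_of_smul_eq (sub_eq_zero.1 h).symm)
    · have hpole : j.castSucc ∈ (poleLabel N y).1 := by
        by_contra hpole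
        exact hfree (mem_free_poleLabel_iff.2 ⟨hanti, hpole⟩)
      have : ⟪e, y j.castSucc⟫ = 0 := by
        rcases hpole with h | h <;> simp [h, heN]
      rwa [this, zero_smul, sub_zero]
  · rw [if_neg fun h => hanti h.1, if_neg hanti, arc_zero_left_half]
    refine smul_ne_zero (by norm_num) fun h => hanti ?_
    exact Subtype.ext (eq_neg_of_add_eq_zero_right h)

theorem arcChain_ne_zero_of_mem_arcDomain (hk : 1 ≤ k) {N e : V} {l : PoleLabel k}
    {y : Fin (k + 1) → Metric.sphere (0 : V) 1} (hy : y ∈ arcDomain N e l) (t : unitInterval) :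
    arcChain (arcDirection N e l) (fun j => (y j : V)) (k * (t : ℝ)) ≠ 0 :=
  arcChain_ne_zero hk (fun j => norm_eq_of_mem_sphere (y j)) hy
    ⟨mul_nonneg k.cast_nonneg t.2.1, mul_le_of_le_one_right k.cast_nonneg t.2.2⟩

theorem continuous_normalize_arcChain (hk : 1 ≤ k) (N e : V) (l : PoleLabel k) :
    Continuous fun q : arcDomain N e l × unitInterval => NormedSpace.normalize
      (arcChain (arcDirection N e l) (fun j => (q.1.1 j : V)) (k * (q.2 : ℝ))) := by
  have hchain : Continuous fun q : arcDomain N e l × unitInterval =>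
      arcChain (arcDirection N e l) (fun j => (q.1.1 j : V)) (k * (q.2 : ℝ)) := by
    have hargs : Continuous fun q : arcDomain N e l × unitInterval =>
        ((fun j => (q.1.1 j : V)), (k : ℝ) * q.2) :=
      .prodMk (continuous_pi fun j => continuous_subtype_val.comp
        ((continuous_apply j).comp (by fun_prop))) (by fun_prop)
    exact (continuous_arcChain (arcDirection N e l)).comp hargs
  have hne (q : arcDomain N e l × unitInterval) := arcChain_ne_zero_of_mem_arcDomain hk q.1.2 q.2
  exact (hchain.norm.inv₀ fun q => norm_ne_zero_iff.2 (hne q)).smul hchain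

/-- The radial projection of the chain of arcs, reparametrised by the unit interval. -/
def arcSection (hk : 1 ≤ k) (N e : V) (l : PoleLabel k) :
    C(arcDomain N e l, C(unitInterval, Metric.sphere (0 : V) 1)) :=
  ContinuousMap.curry
    ⟨fun q => ⟨NormedSpace.normalize
        (arcChain (arcDirection N e l) (fun j => (q.1.1 j : V)) (k * (q.2 : ℝ))),
      mem_sphere_zero_iff_norm.2
        (NormedSpace.norm_normalize (arcChain_ne_zero_of_mem_arcDomain hk q.1.2 q.2))⟩,
      (continuous_normalize_arcChain hk N e l).subtype_mk _⟩

theorem natCast_mul_evalPt (hk : 1 ≤ k) (j : Fin (k + 1)) : k * (evalPt (k + 1) j : ℝ) = j := by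
  have : (k : ℝ) ≠ 0 := by positivity
  simp only [evalPt, Nat.cast_succ, add_sub_cancel_right]
  field_simp

theorem arcSection_evalPt (hk : 1 ≤ k) {N e : V} {l : PoleLabel k} (y : arcDomain N e l)
    (j : Fin (k + 1)) : arcSection hk N e l y (evalPt (k + 1) j) = y.1 j := by
  apply Subtype.ext
  change NormedSpace.normalize (arcChain _ _ (k * (evalPt (k + 1) j : ℝ))) = (y.1 j : V)
  rw [natCast_mul_evalPt hk, arcChain_natCast]
  exact NormedSpace.normalize_eq_self_of_norm_eq_one (norm_eq_of_mem_sphere _)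

theorem arcSection_rtuple (hk : 1 ≤ k) {N e : V} {l : PoleLabel k} (y : arcDomain N e l) :
    arcSection hk N e l.rev ⟨rtuple y, rtuple_mem_arcDomain y.2⟩ =
      rpath (arcSection hk N e l y) := by
  ext1 t
  apply Subtype.ext
  change NormedSpace.normalize (arcChain (arcDirection N e l.rev)
      ((fun j => (y.1 j : V)) ∘ Fin.rev) (k * (t : ℝ))) =
    NormedSpace.normalize (arcChain (arcDirection N e l) _ (k * (unitInterval.symm t : ℝ)))
  rw [arcDirection_rev, arcChain_comp_rev, unitInterval.coe_symm_eq, mul_sub, mul_one]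

theorem hasBidirPlanners_sphere (hk : 1 ≤ k) {N : Metric.sphere (0 : V) 1} {e : V} (he : e ≠ 0)
    (heN : ⟪e, N⟫ = 0) : HasBidirPlanners (Metric.sphere (0 : V) 1) (k + 1) (k + 2) :=
  .of_openPieces
    (W := fun l => stratumNhd (poleLabel N) PoleLabel.rank l ∩ arcDomain (N : V) e l)
    (rank := fun l => ⟨l.rank, Nat.lt_succ_of_le l.rank_le⟩) (r := PoleLabel.rev)
    (fun l => (isOpen_stratumNhd _ _ l).inter (isOpen_arcDomain _ e l))
    (fun y => ⟨poleLabel N y, mem_stratumNhd poleLabel_eq_or_rank_lt_of_mem_closure,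
      mem_arcDomain_poleLabel he heN y⟩)
    (fun h h' hrank => eq_of_mem_stratumNhd h.1 h'.1 (congrArg Fin.val hrank))
    (fun h => ⟨mem_stratumNhd_of_isometry isometry_rtuple rtuple_involutive
      PoleLabel.rev_involutive (poleLabel_rtuple N) PoleLabel.rank_rev h.1,
      rtuple_mem_arcDomain h.2⟩)
    (fun l => Fin.ext l.rank_rev)
    (fun l => (arcSection hk (N : V) e l).comp
      ⟨Set.inclusion Set.inter_subset_right, continuous_inclusion _⟩)
    (fun _ _ j => arcSection_evalPt hk _ j)
    (fun _ y => arcSection_rtuple hk (Set.inclusion Set.inter_subset_right y))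

theorem hasBidirPlanners_sph {m n : ℕ} (hm : 1 ≤ m) (hn : 2 ≤ n) :
    HasBidirPlanners (Sph m) n (n + 1) := by
  obtain ⟨k, rfl⟩ : ∃ k, n = k + 1 := ⟨n - 1, by lia⟩
  have hlast : Fin.last m ≠ 0 := Fin.ne_of_val_ne (show m ≠ 0 by lia)
  refine hasBidirPlanners_sphere (by lia)
    (N := ⟨EuclideanSpace.single 0 1, by simp⟩) (e := EuclideanSpace.single (Fin.last m) 1) ?_ ?_
  · simp
  · simp [EuclideanSpace.inner_single_left, hlast]

end UpperBound

/-- For every `m ≥ 1` even and every `n ≥ 2`,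
`TC^β_n(S^m) = n + 1`. -/
theorem TCbeta_sphere_even (m n : ℕ) (hm : 1 ≤ m) (hme : Even m) (hn : 2 ≤ n) :
    TCbeta (Sph m) n = (n : ℕ∞) + 1 := by
  refine le_antisymm (sInf_le ⟨n + 1, by push_cast; rfl, hasBidirPlanners_sph hm hn⟩) (le_sInf ?_)
  rintro _ ⟨k, rfl, hk⟩
  exact_mod_cast succ_le_of_hasPlanners_sphere hm hme hn hk.hasPlanners
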